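/- arXiv:1909.00062 — 2 statements merged into one kernel-verified Lean document; each statement's English description precedes it below -/
import Mathlib

section
/- Weak Harnack inequality for subsolutions, non-divergence form (Krylov–Safonov): For every η > 0 there exists c(η) ∈ (0,1), depending only on η, n, λ, Λ, such that the following holds. Let A be uniformly elliptic on the unit ball B_1 ⊂ ℝ^n and let φ ∈ C²(B_1) satisfy tr(A(x) D²φ(x)) ≥ 0 for all x ∈ B_1 and φ ≤ 1 in B_1. If the Lebesgue measure of {x ∈ B_1 : φ(x) ≤ 0} is at least η, then φ ≤ 1 − c(η) in B_{1/2}. -/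
open MeasureTheory Metric Filter

noncomputable section

/-- `ℝ^n` with the Euclidean norm. -/
abbrev Eucl (n : ℕ) : Type := EuclideanSpace ℝ (Fin n)

/-- Uniform ellipticity of the coefficient matrix `A` on `Ω`:
`λ|ξ|² ≤ ξ·(A(x)ξ)` and `|A(x)ξ| ≤ Λ|ξ|`. -/
def UnifElliptic {n : ℕ} (lam Lam : ℝ) (Ω : Set (Eucl n))
    (A : Eucl n → Matrix (Fin n) (Fin n) ℝ) : Prop :=
  ∀ x ∈ Ω, ∀ ξ : Eucl n,
    lam * ‖ξ‖ ^ 2 ≤ ∑ i, ξ i * ∑ j, A x i j * ξ j ∧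
    Real.sqrt (∑ i, (∑ j, A x i j * ξ j) ^ 2) ≤ Lam * ‖ξ‖

/-- `u` is a `C²` subsolution: `tr(A D²u) ≥ 0` on the open set `Ω`. -/
def NondivSubsolution {n : ℕ} (A : Eucl n → Matrix (Fin n) (Fin n) ℝ) (Ω : Set (Eucl n))
    (u : Eucl n → ℝ) : Prop :=
  ContDiffOn ℝ 2 u Ω ∧ ∀ x ∈ Ω,
    0 ≤ ∑ i, ∑ j, A x i j *
      fderiv ℝ (fun y => fderiv ℝ u y (EuclideanSpace.single i 1)) x
        (EuclideanSpace.single j 1)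

lemma trace_lower {n : ℕ} {lam : ℝ} {A P : Matrix (Fin n) (Fin n) ℝ}
    (hA : ∀ ξ : Eucl n, lam * ‖ξ‖ ^ 2 ≤ ∑ i, ξ i * ∑ j, A i j * ξ j)
    (hP : P.PosSemidef) : lam * P.trace ≤ ∑ i, ∑ j, A i j * P i j := by
  obtain ⟨B, hB⟩ : ∃ B : Matrix (Fin n) (Fin n) ℝ, P = B.conjTranspose * B := by
    open scoped MatrixOrder in
    obtain ⟨B, hB⟩ := CStarAlgebra.nonneg_iff_eq_star_mul_self.mp (Matrix.nonneg_iff_posSemidef.mpr hP)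
    exact ⟨B, hB⟩
  have hPij : ∀ i j, P i j = ∑ k, B k i * B k j := by
    intro i j
    rw [hB]; simp [Matrix.mul_apply]
  have h1 : ∑ i, ∑ j, A i j * P i j = ∑ k, ∑ i, B k i * ∑ j, A i j * B k j := by
    simp_rw [hPij, Finset.mul_sum]
    calc _ = ∑ i, ∑ k, ∑ j, A i j * (B k i * B k j) :=
          Finset.sum_congr rfl fun i _ => Finset.sum_comm
      _ = ∑ k, ∑ i, ∑ j, A i j * (B k i * B k j) := Finset.sum_comm
      _ = _ := Finset.sum_congr rfl fun k _ => Finset.sum_congr rfl fun i _ =>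
          Finset.sum_congr rfl fun j _ => by ring
  have h2 : P.trace = ∑ k, ∑ i, B k i ^ 2 := by
    simp only [Matrix.trace, Matrix.diag, hPij]
    rw [Finset.sum_comm]
    simp [sq]
  rw [h1, h2, Finset.mul_sum]
  refine Finset.sum_le_sum fun k _ => ?_
  have := hA (WithLp.toLp 2 (fun i => B k i))
  rw [EuclideanSpace.norm_sq_eq] at this
  simpa using this

lemma trace_upper {n : ℕ} {Lam : ℝ} {A : Matrix (Fin n) (Fin n) ℝ}
    (hA : ∀ ξ : Eucl n, Real.sqrt (∑ i, (∑ j, A i j * ξ j) ^ 2) ≤ Lam * ‖ξ‖) :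
    ∑ i, A i i ≤ n * Lam := by
  have : ∀ i ∈ Finset.univ, A i i ≤ Lam := by
    intro i _
    have h := hA (EuclideanSpace.single i 1)
    simp at h
    refine le_trans ?_ h
    refine Real.le_sqrt_of_sq_le ?_
    exact Finset.single_le_sum (f := fun k => A k i ^ 2) (fun k _ => sq_nonneg _) (Finset.mem_univ i)
  simpa using Finset.sum_le_card_nsmul _ _ _ this

lemma det_le_trace {n : ℕ} {P : Matrix (Fin n) (Fin n) ℝ} (hP : P.PosSemidef) :
    |P.det| ≤ P.trace ^ n := by
  have h0 : ∀ i, 0 ≤ hP.1.eigenvalues i := hP.eigenvalues_nonneg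
  rw [hP.1.det_eq_prod_eigenvalues, hP.1.trace_eq_sum_eigenvalues]
  simp only [RCLike.ofReal_real_eq_id, id]
  rw [abs_of_nonneg (Finset.prod_nonneg fun i _ => h0 i)]
  calc _ ≤ ∏ i : Fin n, ∑ j, hP.1.eigenvalues j := by
        refine Finset.prod_le_prod (fun i _ => h0 i) fun i _ => ?_
        exact Finset.single_le_sum (f := hP.1.eigenvalues) (fun k _ => h0 k) (Finset.mem_univ i)
    _ = _ := by simp

/-- one-dimensional second order necessary condition -/
lemma second_order_1d {f f' : ℝ → ℝ} {c : ℝ}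
    (hf : ∀ᶠ s in nhds (0:ℝ), HasDerivAt f (f' s) s) (hf' : HasDerivAt f' c 0)
    (hmin : IsLocalMin f 0) : f' 0 = 0 ∧ 0 ≤ c := by
  have e : deriv f =ᶠ[nhds 0] f' := hf.mono fun s hs => hs.deriv
  have h0 : f' 0 = 0 := hmin.hasDerivAt_eq_zero hf.self_of_nhds
  refine ⟨h0, ?_⟩
  by_contra hc
  push Not at hc
  have hd2 : deriv (deriv f) 0 = c := by rw [e.deriv_eq, hf'.deriv]
  have hmax : IsLocalMax f 0 := by
    apply isLocalMax_of_deriv_deriv_neg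
    · rw [hd2]; exact hc
    · rw [e.self_of_nhds, h0]
    · exact hf.self_of_nhds.continuousAt
  have hconst : f =ᶠ[nhds 0] fun _ => f 0 := by
    filter_upwards [hmin, hmax] with s h1 h2 using le_antisymm h2 h1
  have : deriv f =ᶠ[nhds 0] fun _ => 0 := by
    have := hconst.deriv
    simpa using this
  have h3 : deriv (deriv f) 0 = 0 := by rw [this.deriv_eq]; simp
  rw [hd2] at h3
  exact absurd h3 hc.ne

/-- The Hessian matrix. -/
def hess {n : ℕ} (u : Eucl n → ℝ) (x : Eucl n) : Matrix (Fin n) (Fin n) ℝ :=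
  fun i j => fderiv ℝ (fun y => fderiv ℝ u y (EuclideanSpace.single i 1)) x
        (EuclideanSpace.single j 1)

lemma diff_fderiv {n : ℕ} {u : Eucl n → ℝ} {x : Eucl n} (hu : ContDiffAt ℝ 2 u x) :
    DifferentiableAt ℝ (fderiv ℝ u) x :=
  (hu.fderiv_right (m := 1) (by norm_num)).differentiableAt (by norm_num)

lemma hess_apply {n : ℕ} {u : Eucl n → ℝ} {x : Eucl n} (hu : ContDiffAt ℝ 2 u x) (i j : Fin n) :
    hess u x i j = fderiv ℝ (fderiv ℝ u) x (EuclideanSpace.single j 1)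
      (EuclideanSpace.single i 1) := by
  unfold hess
  rw [fderiv_clm_apply (diff_fderiv hu) (by fun_prop)]
  simp

lemma hess_symm {n : ℕ} {u : Eucl n → ℝ} {x : Eucl n} (hu : ContDiffAt ℝ 2 u x) :
    (hess u x).IsHermitian := by
  ext i j
  have := hu.isSymmSndFDerivAt (by simp)
  simp only [Matrix.conjTranspose_apply, hess_apply hu, star_trivial]
  exact this _ _

lemma eucl_eq_sum {n : ℕ} (ξ : Eucl n) : ξ = ∑ i, ξ i • EuclideanSpace.single i (1:ℝ) := by
  ext j
  simp [Finset.sum_apply, Pi.single_apply]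

lemma hess_quad {n : ℕ} {u : Eucl n → ℝ} {x : Eucl n} (hu : ContDiffAt ℝ 2 u x) (ξ : Eucl n) :
    fderiv ℝ (fderiv ℝ u) x ξ ξ = ∑ i, ξ i * ∑ j, hess u x i j * ξ j := by
  conv_lhs => rw [eucl_eq_sum ξ]
  simp only [map_sum, map_smul, sum_apply, smul_apply,
    hess_apply hu, smul_eq_mul]
  simp only [Finset.mul_sum]
  refine Finset.sum_congr rfl fun i _ => Finset.sum_congr rfl fun j _ => by ring

lemma second_order_line {n : ℕ} {u : Eucl n → ℝ} {x : Eucl n} (hu : ContDiffAt ℝ 2 u x)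
    (ξ : Eucl n) {q q' : ℝ → ℝ} {c : ℝ} (hq : ∀ s, HasDerivAt q (q' s) s)
    (hq' : HasDerivAt q' c 0) (hmin : IsLocalMin (fun s : ℝ => u (x + s • ξ) + q s) 0) :
    fderiv ℝ u x ξ + q' 0 = 0 ∧ 0 ≤ (∑ i, ξ i * ∑ j, hess u x i j * ξ j) + c := by
  have hl : ∀ s : ℝ, HasDerivAt (fun s : ℝ => x + s • ξ) ξ s := by
    intro s
    simpa using ((hasDerivAt_id s).smul_const ξ).const_add x
  have hev : ∀ᶠ s : ℝ in nhds 0, DifferentiableAt ℝ u (x + s • ξ) := by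
    have h1 : ∀ᶠ y in nhds x, DifferentiableAt ℝ u y :=
      (hu.eventually (by simp)).mono fun y hy => hy.differentiableAt (by norm_num)
    have h2 : Tendsto (fun s : ℝ => x + s • ξ) (nhds 0) (nhds x) := by
      have := (hl 0).continuousAt.tendsto
      simpa using this
    exact h2.eventually h1
  have key := second_order_1d (f := fun s : ℝ => u (x + s • ξ) + q s)
    (f' := fun s => fderiv ℝ u (x + s • ξ) ξ + q' s)
    (c := fderiv ℝ (fderiv ℝ u) x ξ ξ + c) ?_ ?_ hmin
  · rw [hess_quad hu] at key
    simpa using key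
  · filter_upwards [hev] with s hs
    exact (hs.hasFDerivAt.comp_hasDerivAt s (hl s)).add (hq s)
  · refine HasDerivAt.add ?_ hq'
    have h1 : HasFDerivAt (fderiv ℝ u) (fderiv ℝ (fderiv ℝ u) x) (x + (0:ℝ) • ξ) := by
      simpa using (diff_fderiv hu).hasFDerivAt
    have h2 := h1.comp_hasDerivAt (0:ℝ) (hl 0)
    simpa using h2.clm_apply (hasDerivAt_const (0:ℝ) ξ)

/-- Nonnegative supersolutions in the unit ball. -/
structure IsSup {n : ℕ} (lam Lam : ℝ) (A : Eucl n → Matrix (Fin n) (Fin n) ℝ)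
    (u : Eucl n → ℝ) : Prop where
  ell : UnifElliptic lam Lam (ball (0 : Eucl n) 1) A
  smooth : ContDiffOn ℝ 2 u (ball (0 : Eucl n) 1)
  nonneg : ∀ x ∈ ball (0 : Eucl n) 1, 0 ≤ u x
  sup : ∀ x ∈ ball (0 : Eucl n) 1, ∑ i, ∑ j, A x i j * hess u x i j ≤ 0

lemma IsSup.cd {n : ℕ} {lam Lam : ℝ} {A : Eucl n → Matrix (Fin n) (Fin n) ℝ}
    {u : Eucl n → ℝ} (h : IsSup lam Lam A u) {x : Eucl n} (hx : x ∈ ball (0 : Eucl n) 1) :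
    ContDiffAt ℝ 2 u x :=
  h.smooth.contDiffAt (isOpen_ball.mem_nhds hx)

lemma norm_line_sq {n : ℕ} (v ξ : Eucl n) (s : ℝ) :
    ‖v + s • ξ‖ ^ 2 = ‖v‖ ^ 2 + 2 * s * inner ℝ v ξ + s ^ 2 * ‖ξ‖ ^ 2 := by
  rw [norm_add_sq_real, inner_smul_right, norm_smul, mul_pow, Real.norm_eq_abs, sq_abs]
  ring

lemma isLocalMin_line {n : ℕ} {g : Eucl n → ℝ} {x : Eucl n} (h : IsLocalMin g x) (ξ : Eucl n) :
    IsLocalMin (fun s : ℝ => g (x + s • ξ)) 0 := by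
  have h2 : Tendsto (fun s : ℝ => x + s • ξ) (nhds 0) (nhds x) := by
    have : Continuous (fun s : ℝ => x + s • ξ) := by fun_prop
    simpa using this.tendsto 0
  have := h2.eventually h
  simpa [IsLocalMin, IsMinFilter] using this

lemma psd_of_quad {n : ℕ} {P : Matrix (Fin n) (Fin n) ℝ} (h : P.IsHermitian)
    (hq : ∀ ξ : Eucl n, 0 ≤ ∑ i, ξ i * ∑ j, P i j * ξ j) : P.PosSemidef := by
  refine Matrix.PosSemidef.of_dotProduct_mulVec_nonneg h fun x => ?_
  have := hq (WithLp.toLp 2 x)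
  simpa [dotProduct, Matrix.mulVec] using this

lemma contact_parab {n : ℕ} {lam Lam : ℝ} (hlam : 0 < lam)
    {A : Eucl n → Matrix (Fin n) (Fin n) ℝ}
    {u : Eucl n → ℝ} (h : IsSup lam Lam A u) {x y : Eucl n} (hx : x ∈ ball (0 : Eucl n) 1)
    {a : ℝ} (ha : 0 < a)
    (hmin : IsLocalMin (fun z => u z + a / 2 * ‖z - y‖ ^ 2) x) :
    (∀ ξ, fderiv ℝ u x ξ = - a * inner ℝ (x - y) ξ) ∧ (hess u x + a • 1).PosSemidef ∧
      (hess u x + a • 1).trace ≤ a * (n * Lam / lam) := by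
  have hu := h.cd hx
  have key : ∀ ξ : Eucl n, fderiv ℝ u x ξ + a * inner ℝ (x - y) ξ = 0 ∧
      0 ≤ (∑ i, ξ i * ∑ j, hess u x i j * ξ j) + a * ‖ξ‖ ^ 2 := by
    intro ξ
    have hm := isLocalMin_line hmin ξ
    have e : ∀ s : ℝ, x + s • ξ - y = (x - y) + s • ξ := fun s => by abel
    simp only [e, norm_line_sq] at hm
    have := second_order_line hu ξ
      (q := fun s => a / 2 * (‖x - y‖ ^ 2 + 2 * s * inner ℝ (x - y) ξ + s ^ 2 * ‖ξ‖ ^ 2))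
      (q' := fun s => a * (inner ℝ (x - y) ξ + s * ‖ξ‖ ^ 2)) (c := a * ‖ξ‖ ^ 2) ?_ ?_ hm
    · simpa using this
    · intro s
      have h1 := (((((hasDerivAt_id s).const_mul 2).mul_const (inner ℝ (x - y) ξ)).const_add
        (‖x - y‖ ^ 2)).add (((hasDerivAt_id s).pow 2).mul_const (‖ξ‖ ^ 2))).const_mul (a / 2)
      refine h1.congr_deriv ?_
      simp; ring
    · have h1 := (((hasDerivAt_id (0:ℝ)).mul_const (‖ξ‖ ^ 2)).const_add
        (inner ℝ (x - y) ξ)).const_mul a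
      refine h1.congr_deriv ?_
      simp
  have hpsd : (hess u x + a • 1).PosSemidef := by
    refine psd_of_quad ((hess_symm hu).add ?_) fun ξ => ?_
    · ext i j
      simp [Matrix.one_apply, eq_comm]
    · refine (key ξ).2.trans_eq ?_
      rw [EuclideanSpace.norm_sq_eq]
      simp only [Matrix.add_apply, add_mul, Finset.sum_add_distrib, mul_add, Finset.mul_sum]
      congr 1
      simp [Matrix.one_apply]
      exact Finset.sum_congr rfl fun i _ => by ring
  refine ⟨fun ξ => by linarith [(key ξ).1], hpsd, ?_⟩
  have h1 := trace_lower (fun ξ => (h.ell x hx ξ).1) hpsd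
  have h2 := trace_upper (fun ξ => (h.ell x hx ξ).2)
  have h3 := h.sup x hx
  have h4 : ∑ i, ∑ j, A x i j * (hess u x + a • 1) i j =
      ∑ i, ∑ j, A x i j * hess u x i j + a * ∑ i, A x i i := by
    simp only [Matrix.add_apply, Finset.sum_add_distrib, mul_add, Finset.mul_sum]
    congr 1
    simp [Matrix.one_apply]
    exact Finset.sum_congr rfl fun i _ => by ring
  rw [h4] at h1
  have h5 : lam * (hess u x + a • 1).trace ≤ a * (n * Lam) := by nlinarith
  rw [← mul_div_assoc, le_div_iff₀ hlam]
  linarith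

lemma contact_gauss {n : ℕ} {lam Lam : ℝ} (hlam : 0 < lam)
    {A : Eucl n → Matrix (Fin n) (Fin n) ℝ}
    {u : Eucl n → ℝ} (h : IsSup lam Lam A u) {x y : Eucl n} (hx : x ∈ ball (0 : Eucl n) 1)
    {m α : ℝ} (hm : 0 < m) (hα : 0 < α)
    (hmin : IsLocalMin (fun z => u z + - m * Real.exp (- α * ‖z - y‖ ^ 2)) x) :
    2 * α * lam * ‖x - y‖ ^ 2 ≤ n * Lam := by
  have hu := h.cd hx
  set v := x - y with hv
  set M := m * Real.exp (- α * ‖v‖ ^ 2) with hM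
  have hMpos : 0 < M := by positivity
  have key : ∀ ξ : Eucl n, 
      0 ≤ (∑ i, ξ i * ∑ j, hess u x i j * ξ j) +
        M * (2 * α * ‖ξ‖ ^ 2 - 4 * α ^ 2 * (inner ℝ v ξ) ^ 2) := by
    intro ξ
    have hm := isLocalMin_line hmin ξ
    have e : ∀ s : ℝ, x + s • ξ - y = v + s • ξ := fun s => by rw [hv]; abel
    simp only [e, norm_line_sq] at hm
    have hexp : ∀ s : ℝ, HasDerivAt (fun s : ℝ => Real.exp (- α * (‖v‖ ^ 2 + 2 * s * inner ℝ v ξ + s ^ 2 * ‖ξ‖ ^ 2)))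
        (Real.exp (- α * (‖v‖ ^ 2 + 2 * s * inner ℝ v ξ + s ^ 2 * ‖ξ‖ ^ 2)) *
          (- α * (2 * inner ℝ v ξ + 2 * s * ‖ξ‖ ^ 2))) s := by
      intro s
      refine HasDerivAt.exp ?_
      have h1 := (((((hasDerivAt_id s).const_mul 2).mul_const (inner ℝ v ξ)).const_add
        (‖v‖ ^ 2)).add (((hasDerivAt_id s).pow 2).mul_const (‖ξ‖ ^ 2))).const_mul (- α)
      refine h1.congr_deriv ?_
      simp
    refine (second_order_line hu ξ
      (q := fun s => - m * Real.exp (- α * (‖v‖ ^ 2 + 2 * s * inner ℝ v ξ + s ^ 2 * ‖ξ‖ ^ 2)))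
      (q' := fun s => - m * (Real.exp (- α * (‖v‖ ^ 2 + 2 * s * inner ℝ v ξ + s ^ 2 * ‖ξ‖ ^ 2)) *
          (- α * (2 * inner ℝ v ξ + 2 * s * ‖ξ‖ ^ 2)))) (c := M * (2 * α * ‖ξ‖ ^ 2 - 4 * α ^ 2 * (inner ℝ v ξ) ^ 2)) ?_ ?_ hm).2
    · intro s
      exact (hexp s).const_mul _
    · have h1 := ((((hasDerivAt_id (0:ℝ)).const_mul 2).mul_const (‖ξ‖ ^ 2)).const_add
        (2 * inner ℝ v ξ)).const_mul (- α)
      refine (((hexp 0).mul h1).const_mul (- m)).congr_deriv ?_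
      rw [hM]
      simp; ring
  set W : Matrix (Fin n) (Fin n) ℝ := (2 * α * M) • 1 - (4 * α ^ 2 * M) • Matrix.of (fun i j => v i * v j) with hW
  have hWij : ∀ i j, W i j = (if i = j then 2 * α * M else 0) - 4 * α ^ 2 * M * (v i * v j) := by
    intro i j
    simp [hW, Matrix.one_apply]
  have hpsd : (hess u x + W).PosSemidef := by
    refine psd_of_quad ((hess_symm hu).add ?_) fun ξ => ?_
    · ext i j
      simp [hWij, eq_comm, mul_comm (v i)]
    · refine (key ξ).trans_eq ?_
      rw [EuclideanSpace.norm_sq_eq, PiLp.inner_apply]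
      simp only [Matrix.add_apply, add_mul, Finset.sum_add_distrib, mul_add]
      congr 1
      simp only [hWij, sub_mul, Finset.sum_sub_distrib, ite_mul, zero_mul, mul_sub]
      simp only [Finset.sum_ite_eq, Finset.mem_univ, if_true, sq (∑ i, inner ℝ (v i) (ξ i)), Finset.sum_mul, Finset.mul_sum]
      congr 1
      · exact Finset.sum_congr rfl fun i _ => by simp; ring
      · exact Finset.sum_congr rfl fun i _ => Finset.sum_congr rfl fun j _ => by simp; ring
  have h1 := trace_lower (fun ξ => (h.ell x hx ξ).1) hpsd
  have h2 := trace_upper (fun ξ => (h.ell x hx ξ).2)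
  have h3 := h.sup x hx
  have h5 := (h.ell x hx v).1
  have h6 : 0 ≤ (hess u x + W).trace := hpsd.trace_nonneg
  have h4 : ∑ i, ∑ j, A x i j * (hess u x + W) i j =
      ∑ i, ∑ j, A x i j * hess u x i j + (2 * α * M * ∑ i, A x i i -
        4 * α ^ 2 * M * ∑ i, v i * ∑ j, A x i j * v j) := by
    simp only [Matrix.add_apply, Finset.sum_add_distrib, mul_add]
    congr 1
    simp only [hWij, mul_sub, Finset.sum_sub_distrib, mul_ite, mul_zero, Finset.sum_ite_eq, Finset.mem_univ, if_true, Finset.mul_sum]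
    congr 1
    · exact Finset.sum_congr rfl fun i _ => by ring
    · exact Finset.sum_congr rfl fun i _ => Finset.sum_congr rfl fun j _ => by ring
  rw [h4] at h1
  have h7 : 0 ≤ 2 * α * M * ∑ i, A x i i - 4 * α ^ 2 * M * ∑ i, v i * ∑ j, A x i j * v j := by
    nlinarith
  have h8 : 0 ≤ (2 * α * M) * (∑ i, A x i i - 2 * α * ∑ i, v i * ∑ j, A x i j * v j) := by
    nlinarith
  have h9 := nonneg_of_mul_nonneg_right h8 (by positivity)
  nlinarith

/-- Doubling constant. -/
def betaC (n : ℕ) (lam Lam : ℝ) : ℝ :=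
  Real.exp (- 4 * (n * Lam / lam)) - Real.exp (- 16 * (n * Lam / lam))

lemma doubling {n : ℕ} (hn : 2 ≤ n) {lam Lam : ℝ} (hlam : 0 < lam) (hLam : 0 < Lam)
    {A : Eucl n → Matrix (Fin n) (Fin n) ℝ}
    {u : Eucl n → ℝ} (h : IsSup lam Lam A u) {z : Eucl n} {r m : ℝ} (hr : 0 < r) (hm : 0 < m)
    (hb : closedBall z (4 * r) ⊆ ball 0 1) (hu : ∀ y ∈ closedBall z r, m ≤ u y) :
    ∀ y ∈ closedBall z (2 * r), m * betaC n lam Lam ≤ u y := by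
  intro y hy
  by_contra hlt
  push Not at hlt
  set κ := n * Lam / lam with hκ
  have hn0 : (0:ℝ) < n := by positivity
  have hκ0 : 0 < κ := by positivity
  set α := κ / r ^ 2 with hα
  have hα0 : 0 < α := by positivity
  have hαr : α * r ^ 2 = κ := by rw [hα]; field_simp
  set g : Eucl n → ℝ := fun w => u w + - m * Real.exp (- α * ‖w - z‖ ^ 2) with hg
  have hcont : ContinuousOn g (closedBall z (4 * r)) := by
    refine ContinuousOn.add (h.smooth.continuousOn.mono hb) ?_
    fun_prop
  obtain ⟨x, hx, hxmin⟩ := (isCompact_closedBall z (4 * r)).exists_isMinOn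
    ⟨z, mem_closedBall_self (by positivity)⟩ hcont
  have hyb : y ∈ closedBall z (4 * r) := closedBall_subset_closedBall (by linarith) hy
  have hgx : g x ≤ g y := hxmin hyb
  have hgy : g y < - m * Real.exp (- 16 * κ) := by
    have h1 : ‖y - z‖ ≤ 2 * r := by simpa [dist_eq_norm] using hy
    have h2 : ‖y - z‖ ^ 2 ≤ (2 * r) ^ 2 := pow_le_pow_left₀ (norm_nonneg _) h1 2
    have h3 : - 4 * κ ≤ - α * ‖y - z‖ ^ 2 := by nlinarith
    have h4 := Real.exp_le_exp.mpr h3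
    have h5 : u y < m * (Real.exp (- 4 * κ) - Real.exp (- 16 * κ)) := hlt
    simp only [hg]
    nlinarith
  have hxb := hb hx
  have hx4 : ‖x - z‖ ≤ 4 * r := by simpa [dist_eq_norm] using hx
  have hxr : r < ‖x - z‖ := by
    by_contra hle
    push Not at hle
    have h1 := hu x (by simpa [dist_eq_norm] using hle)
    have h2 : Real.exp (- α * ‖x - z‖ ^ 2) ≤ 1 := by
      rw [Real.exp_le_one_iff]
      nlinarith [sq_nonneg ‖x - z‖]
    have h3 : g x = u x + - m * Real.exp (- α * ‖x - z‖ ^ 2) := rfl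
    have h4 := mul_le_mul_of_nonneg_left h2 hm.le
    have h5 : 0 < m * Real.exp (- 16 * κ) := by positivity
    linarith
  have hxr4 : ‖x - z‖ < 4 * r := by
    refine lt_of_le_of_ne hx4 fun he => ?_
    have h3 : g x = u x + - m * Real.exp (- α * ‖x - z‖ ^ 2) := rfl
    have h1 : - α * ‖x - z‖ ^ 2 = - 16 * κ := by rw [he, ← hαr]; ring
    rw [h1] at h3
    have := h.nonneg x hxb
    linarith
  have hloc : IsLocalMin g x := hxmin.isLocalMin (mem_of_superset
    (isOpen_ball.mem_nhds (show x ∈ ball z (4 * r) by simpa [dist_eq_norm] using hxr4))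
    ball_subset_closedBall)
  have hfin := contact_gauss hlam h hxb hm hα0 hloc
  have h1 : r ^ 2 ≤ ‖x - z‖ ^ 2 := pow_le_pow_left₀ hr.le hxr.le 2
  have h2 : κ ≤ α * ‖x - z‖ ^ 2 := by rw [← hαr]; gcongr
  have h3 : n * Lam = κ * lam := by rw [hκ]; field_simp
  have h4 : κ * lam ≤ α * ‖x - z‖ ^ 2 * lam := by gcongr
  have h5 : 0 < κ * lam := by positivity
  nlinarith

/-- The contact map `x ↦ x + ∇u(x) / a`. -/
def contactMap {n : ℕ} (a : ℝ) (u : Eucl n → ℝ) (x : Eucl n) : Eucl n :=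
  WithLp.toLp 2 fun i => x i + a⁻¹ * fderiv ℝ u x (EuclideanSpace.single i 1)

lemma contactMap_diff {n : ℕ} (a : ℝ) {u : Eucl n → ℝ} {x : Eucl n} (hu : ContDiffAt ℝ 2 u x) :
    DifferentiableAt ℝ (contactMap a u) x := by
  rw [differentiableAt_euclidean]
  intro i
  simp only [contactMap]
  have := diff_fderiv hu
  refine DifferentiableAt.add (by fun_prop) (DifferentiableAt.const_mul ?_ _)
  exact this.clm_apply (by fun_prop)

lemma contactMap_det {n : ℕ} {a : ℝ} (ha : 0 < a) {u : Eucl n → ℝ} {x : Eucl n}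
    (hu : ContDiffAt ℝ 2 u x) :
    (fderiv ℝ (contactMap a u) x).det = (a⁻¹) ^ n * (hess u x + a • 1).det := by
  rw [ContinuousLinearMap.det, ← LinearMap.det_toMatrix (EuclideanSpace.basisFun (Fin n) ℝ).toBasis]
  have : (LinearMap.toMatrix (EuclideanSpace.basisFun (Fin n) ℝ).toBasis
      (EuclideanSpace.basisFun (Fin n) ℝ).toBasis) (fderiv ℝ (contactMap a u) x : Eucl n →ₗ[ℝ] Eucl n)
      = a⁻¹ • (hess u x + a • 1) := by
    ext i j
    rw [LinearMap.toMatrix_apply]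
    have hd := (contactMap_diff a hu).hasFDerivAt
    have h1 : HasFDerivAt (fun y => contactMap a u y i)
      ((EuclideanSpace.proj i : Eucl n →L[ℝ] ℝ) ∘L (fderiv ℝ (contactMap a u) x)) x :=
      (EuclideanSpace.proj i : Eucl n →L[ℝ] ℝ).hasFDerivAt.comp x hd
    have hdd : DifferentiableAt ℝ (fun y => fderiv ℝ u y (EuclideanSpace.single i 1)) x :=
      (diff_fderiv hu).clm_apply (by fun_prop)
    have h2 : HasFDerivAt (fun y => contactMap a u y i)
      ((EuclideanSpace.proj i : Eucl n →L[ℝ] ℝ) +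
        a⁻¹ • fderiv ℝ (fun y => fderiv ℝ u y (EuclideanSpace.single i 1)) x) x := by
      simp only [contactMap]
      exact (EuclideanSpace.proj i : Eucl n →L[ℝ] ℝ).hasFDerivAt.add (hdd.hasFDerivAt.const_mul _)
    have h3 := h1.unique h2
    have h4 := congrArg (fun L : Eucl n →L[ℝ] ℝ => L (EuclideanSpace.single j 1)) h3
    simp only [ContinuousLinearMap.comp_apply, add_apply, smul_apply] at h4
    simp only [OrthonormalBasis.coe_toBasis_repr_apply, OrthonormalBasis.coe_toBasis,
      EuclideanSpace.basisFun_apply, EuclideanSpace.basisFun_repr, ContinuousLinearMap.coe_coe]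
    refine Eq.trans h4 ?_
    simp only [hess, Matrix.smul_apply, Matrix.add_apply, Matrix.one_apply, smul_eq_mul]
    rw [mul_add, add_comm]
    congr 1
    by_cases hij : i = j
    · subst hij; simp [ha.ne']
    · simp [hij]
  rw [this, Matrix.det_smul]
  simp

/-- Point-to-measure estimate. -/
lemma point_to_measure {n : ℕ} (hn : 2 ≤ n) {lam Lam : ℝ} (hlam : 0 < lam) (hLam : 0 < Lam)
    {A : Eucl n → Matrix (Fin n) (Fin n) ℝ}
    {u : Eucl n → ℝ} (h : IsSup lam Lam A u) {x₀ : Eucl n} {ρ t : ℝ} (hρ : 0 < ρ) (ht : 0 < t)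
    (hb : closedBall x₀ ρ ⊆ ball 0 1) (hu : u x₀ < t / 2) :
    volume.real (ball x₀ (ρ / 4)) ≤
      (n * Lam / lam) ^ n * volume.real {y ∈ closedBall x₀ ρ | u y < t} := by
  set κ := n * Lam / lam with hκ
  have hn0 : (0:ℝ) < n := by positivity
  have hκ0 : 0 < κ := by positivity
  set a := 2 * t / ρ ^ 2 with ha
  have ha0 : 0 < a := by positivity
  have haρ : a * ρ ^ 2 = 2 * t := by rw [ha]; field_simp
  set T := contactMap a u with hT
  set S : Set (Eucl n) := {y ∈ ball x₀ ρ | u y < t} ∩ {y | |(fderiv ℝ T y).det| ≤ κ ^ n} with hS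
  have hbb : ball x₀ ρ ⊆ ball 0 1 := ball_subset_closedBall.trans hb
  have hSmeas : MeasurableSet S := by
    refine MeasurableSet.inter ?_ ?_
    · have : ContinuousOn u (ball x₀ ρ) := h.smooth.continuousOn.mono hbb
      exact (this.isOpen_inter_preimage isOpen_ball (isOpen_Iio (a := t))).measurableSet
    · refine measurableSet_le ?_ measurable_const
      have h1 : Measurable (fderiv ℝ T) := measurable_fderiv ℝ T
      have h2 : Measurable fun L : Eucl n →L[ℝ] Eucl n => |L.det| :=
        (ContinuousLinearMap.continuous_det.abs).measurable
      exact h2.comp h1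
  have hsub : ball x₀ (ρ / 4) ⊆ T '' S := by
    intro y hy
    have hy' : ‖x₀ - y‖ < ρ / 4 := by rw [mem_ball, dist_comm, dist_eq_norm] at hy; exact hy
    set g : Eucl n → ℝ := fun w => u w + a / 2 * ‖w - y‖ ^ 2 with hg
    have hcont : ContinuousOn g (closedBall x₀ ρ) := by
      refine ContinuousOn.add (h.smooth.continuousOn.mono hb) ?_
      fun_prop
    obtain ⟨x, hx, hxmin⟩ := (isCompact_closedBall x₀ ρ).exists_isMinOn
      ⟨x₀, mem_closedBall_self (by positivity)⟩ hcont
    have hgx : g x ≤ g x₀ := hxmin (mem_closedBall_self (by positivity))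
    have hg0 : g x₀ < 9 * t / 16 := by
      have h2 : ‖x₀ - y‖ ^ 2 ≤ (ρ / 4) ^ 2 := pow_le_pow_left₀ (norm_nonneg _) hy'.le 2
      have h3 : a / 2 * ‖x₀ - y‖ ^ 2 ≤ a / 2 * (ρ / 4) ^ 2 := by gcongr
      simp only [hg]
      nlinarith
    have hxb := hb hx
    have hux := h.nonneg x hxb
    have hgx' : g x = u x + a / 2 * ‖x - y‖ ^ 2 := rfl
    have hxlt : u x < t := by
      have : 0 ≤ a / 2 * ‖x - y‖ ^ 2 := by positivity
      linarith
    have hxint : x ∈ ball x₀ ρ := by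
      rw [mem_ball]
      refine lt_of_le_of_ne (mem_closedBall.mp hx) fun he => ?_
      have h1 : 3 * ρ / 4 ≤ ‖x - y‖ := by
        have := dist_triangle x y x₀
        rw [he, dist_eq_norm, dist_comm y, dist_eq_norm] at this
        linarith
      have h2 : (3 * ρ / 4) ^ 2 ≤ ‖x - y‖ ^ 2 := pow_le_pow_left₀ (by positivity) h1 2
      have h3 : a / 2 * (3 * ρ / 4) ^ 2 ≤ a / 2 * ‖x - y‖ ^ 2 := by gcongr
      nlinarith
    have hloc : IsLocalMin g x := hxmin.isLocalMin (mem_of_superset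
      (isOpen_ball.mem_nhds hxint) ball_subset_closedBall)
    obtain ⟨hgrad, hpsd, htr⟩ := contact_parab hlam h hxb ha0 hloc
    refine ⟨x, ⟨⟨hxint, hxlt⟩, ?_⟩, ?_⟩
    · show |(fderiv ℝ T x).det| ≤ κ ^ n
      rw [hT, contactMap_det ha0 (h.cd hxb), abs_mul, abs_of_nonneg (by positivity)]
      have h1 := det_le_trace hpsd
      have h2 : (hess u x + a • 1).trace ^ n ≤ (a * κ) ^ n :=
        pow_le_pow_left₀ hpsd.trace_nonneg htr n
      calc (a⁻¹) ^ n * |(hess u x + a • 1).det| ≤ (a⁻¹) ^ n * (a * κ) ^ n := by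
            gcongr; exact h1.trans h2
        _ = κ ^ n := by rw [← mul_pow]; congr 1; field_simp
    · ext i
      simp only [hT, contactMap, hgrad]
      simp [EuclideanSpace.inner_single_right]
      field_simp
      ring
  have hmain : volume (T '' S) ≤ ENNReal.ofReal (κ ^ n) * volume S := by
    refine (addHaar_image_le_lintegral_abs_det_fderiv volume hSmeas (f' := fderiv ℝ T) ?_).trans ?_
    · intro x hx
      exact (contactMap_diff a (h.cd (hbb hx.1.1))).hasFDerivAt.hasFDerivWithinAt
    · calc _ ≤ ∫⁻ x in S, ENNReal.ofReal (κ ^ n) := by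
            refine setLIntegral_mono measurable_const fun x hx => ?_
            exact ENNReal.ofReal_le_ofReal hx.2
        _ = _ := by simp
  have hfin : volume {y ∈ closedBall x₀ ρ | u y < t} ≠ ⊤ :=
    ((measure_mono (fun y hy => hy.1)).trans_lt (measure_closedBall_lt_top (x := x₀) (r := ρ))).ne
  have hSs : S ⊆ {y ∈ closedBall x₀ ρ | u y < t} := fun y hy =>
    ⟨ball_subset_closedBall hy.1.1, hy.1.2⟩
  have h1 : volume (ball x₀ (ρ / 4)) ≤
      ENNReal.ofReal (κ ^ n) * volume {y ∈ closedBall x₀ ρ | u y < t} :=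
    (measure_mono hsub).trans (hmain.trans (by gcongr))
  have h2 := ENNReal.toReal_mono (ENNReal.mul_ne_top ENNReal.ofReal_ne_top hfin) h1
  rw [ENNReal.toReal_mul, ENNReal.toReal_ofReal (by positivity)] at h2
  exact h2

/-- The density threshold. -/
def deltaC (n : ℕ) (lam Lam : ℝ) : ℝ := (1 / 8) ^ n / (n * Lam / lam) ^ n

/-- The constant of one step of the iteration. -/
def gammaC (n : ℕ) (lam Lam : ℝ) : ℝ := betaC n lam Lam ^ 2 / 2

lemma kappa_pos {n : ℕ} (hn : 2 ≤ n) {lam Lam : ℝ} (hlam : 0 < lam) (hLam : 0 < Lam) :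
    0 < n * Lam / lam := by
  have hn0 : (0:ℝ) < n := by positivity
  positivity

lemma betaC_pos {n : ℕ} (hn : 2 ≤ n) {lam Lam : ℝ} (hlam : 0 < lam) (hLam : 0 < Lam) :
    0 < betaC n lam Lam := by
  have := kappa_pos hn hlam hLam
  unfold betaC
  rw [sub_pos, Real.exp_lt_exp]
  linarith

lemma betaC_le {n : ℕ} (hn : 2 ≤ n) {lam Lam : ℝ} (hlam : 0 < lam) (hLam : 0 < Lam) :
    betaC n lam Lam ≤ 1 := by
  have := kappa_pos hn hlam hLam
  unfold betaC
  have h1 : Real.exp (- 4 * (n * Lam / lam)) ≤ 1 := by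
    rw [Real.exp_le_one_iff]; linarith
  have h2 := Real.exp_pos (- 16 * (n * Lam / lam))
  linarith

lemma gammaC_pos {n : ℕ} (hn : 2 ≤ n) {lam Lam : ℝ} (hlam : 0 < lam) (hLam : 0 < Lam) :
    0 < gammaC n lam Lam := by
  have := betaC_pos hn hlam hLam
  unfold gammaC; positivity

lemma gammaC_lt {n : ℕ} (hn : 2 ≤ n) {lam Lam : ℝ} (hlam : 0 < lam) (hLam : 0 < Lam) :
    gammaC n lam Lam < 1 := by
  have := betaC_pos hn hlam hLam
  have := betaC_le hn hlam hLam
  unfold gammaC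
  nlinarith

lemma deltaC_pos {n : ℕ} (hn : 2 ≤ n) {lam Lam : ℝ} (hlam : 0 < lam) (hLam : 0 < Lam) :
    0 < deltaC n lam Lam := by
  have := kappa_pos hn hlam hLam
  unfold deltaC; positivity

lemma finite_sub_cb {n : ℕ} {x : Eucl n} {r : ℝ} {s : Set (Eucl n)} (h : s ⊆ closedBall x r) :
    volume s ≠ ⊤ :=
  ((measure_mono h).trans_lt (measure_closedBall_lt_top (x := x) (r := r))).ne

lemma vol_cb {n : ℕ} (x : Eucl n) {r : ℝ} (hr : 0 ≤ r) :
    volume.real (closedBall x r) = r ^ n * volume.real (ball (0 : Eucl n) 1) := by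
  rw [Measure.addHaar_real_closedBall _ _ hr]
  simp

lemma vol_b {n : ℕ} (x : Eucl n) {r : ℝ} (hr : 0 < r) :
    volume.real (ball x r) = r ^ n * volume.real (ball (0 : Eucl n) 1) := by
  rw [Measure.real, Measure.addHaar_ball_of_pos _ _ hr, ENNReal.toReal_mul,
    ENNReal.toReal_ofReal (by positivity)]
  simp [Measure.real]

lemma omega_pos (n : ℕ) : 0 < volume.real (ball (0 : Eucl n) 1) :=
  ENNReal.toReal_pos (measure_ball_pos _ _ one_pos).ne' measure_ball_lt_top.ne

lemma spread {n : ℕ} (hn : 2 ≤ n) {lam Lam : ℝ} (hlam : 0 < lam) (hLam : 0 < Lam)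
    {A : Eucl n → Matrix (Fin n) (Fin n) ℝ}
    {u : Eucl n → ℝ} (h : IsSup lam Lam A u) {x : Eucl n} {ρ t : ℝ} (hρ : 0 < ρ) (ht : 0 < t)
    (hb : closedBall x (4 * ρ) ⊆ ball 0 1)
    (hd : volume.real {y ∈ closedBall x ρ | u y < t} <
      deltaC n lam Lam * volume.real (closedBall x ρ)) :
    ∀ y ∈ closedBall x (2 * ρ), gammaC n lam Lam * t ≤ u y := by
  have hκ := kappa_pos hn hlam hLam
  have hβ := betaC_pos hn hlam hLam
  have h1 : ∀ z ∈ closedBall x (ρ / 2), t / 2 ≤ u z := by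
    intro z hz
    by_contra hlt
    push Not at hlt
    have hsub : closedBall z (ρ / 2) ⊆ closedBall x ρ :=
      closedBall_subset_closedBall' (by rw [mem_closedBall] at hz; linarith)
    have hp := point_to_measure hn hlam hLam h (half_pos hρ) ht
      (hsub.trans ((closedBall_subset_closedBall (by linarith)).trans hb)) hlt
    have hm : volume.real {y ∈ closedBall z (ρ / 2) | u y < t} ≤
        volume.real {y ∈ closedBall x ρ | u y < t} :=
      measureReal_mono (fun y hy => ⟨hsub hy.1, hy.2⟩) (finite_sub_cb (fun y hy => hy.1))
    rw [vol_b _ (by positivity)] at hp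
    rw [vol_cb _ hρ.le] at hd
    have h2 := hm.trans_lt hd
    have h3 : (n * Lam / lam) ^ n * volume.real {y ∈ closedBall z (ρ / 2) | u y < t} <
       (n * Lam / lam) ^ n * (deltaC n lam Lam * (ρ ^ n * volume.real (ball (0 : Eucl n) 1))) := by
      gcongr
    have h4 : (n * Lam / lam) ^ n * (deltaC n lam Lam * (ρ ^ n * volume.real (ball (0 : Eucl n) 1)))
        = (ρ / 2 / 4) ^ n * volume.real (ball (0 : Eucl n) 1) := by
      have : ρ / 2 / 4 = (1 / 8) * ρ := by ring
      rw [this, mul_pow]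
      unfold deltaC
      have : (n * Lam / lam) ^ n ≠ 0 := by positivity
      generalize (n * Lam / lam) ^ n = q at *
      field_simp
    linarith
  have h2 := doubling hn hlam hLam h (half_pos hρ) (half_pos ht)
    ((closedBall_subset_closedBall (by linarith)).trans hb) h1
  have e : 2 * (ρ / 2) = ρ := by ring
  rw [e] at h2
  have h3 := doubling hn hlam hLam h hρ (by positivity) hb h2
  intro y hy
  refine le_trans (le_of_eq ?_) (h3 y hy)
  unfold gammaC; ring

lemma cb_sub {n : ℕ} {x : Eucl n} {s r : ℝ} (hx : x ∈ ball (0 : Eucl n) (1 - s)) (hr : r ≤ s) :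
    closedBall x r ⊆ ball 0 1 := by
  intro y hy
  rw [mem_ball] at *
  rw [mem_closedBall] at hy
  linarith [dist_triangle y x 0]

lemma meas_lt {n : ℕ} {u : Eucl n → ℝ} (hc : ContinuousOn u (ball (0 : Eucl n) 1)) (t : ℝ) :
    MeasurableSet {y ∈ ball (0 : Eucl n) 1 | u y < t} :=
  (hc.isOpen_inter_preimage isOpen_ball (isOpen_Iio (a := t))).measurableSet

lemma meas_ge {n : ℕ} {u : Eucl n → ℝ} (hc : ContinuousOn u (ball (0 : Eucl n) 1)) (t : ℝ) :
    MeasurableSet {y ∈ ball (0 : Eucl n) 1 | t ≤ u y} := by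
  have : {y ∈ ball (0 : Eucl n) 1 | t ≤ u y} = ball 0 1 \ {y ∈ ball (0 : Eucl n) 1 | u y < t} := by
    ext y; simp; tauto
  rw [this]
  exact measurableSet_ball.diff (meas_lt hc t)

lemma good_radius {n : ℕ} (hn : 2 ≤ n) {lam Lam : ℝ} (hlam : 0 < lam) (hLam : 0 < Lam)
    {A : Eucl n → Matrix (Fin n) (Fin n) ℝ}
    {u : Eucl n → ℝ} (h : IsSup lam Lam A u) {x : Eucl n} {s r t : ℝ} (hr : 0 < r) (ht : 0 < t)
    (hrs : 4 * r ≤ s) (hx : x ∈ ball (0 : Eucl n) (1 - s))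
    (hno : deltaC n lam Lam * volume.real (closedBall x r) ≤
      volume.real {y ∈ closedBall x r | u y < t})
    (hdens : Tendsto (fun r => volume ({y ∈ ball (0 : Eucl n) 1 | t ≤ u y} ∩ closedBall x r) /
      volume (closedBall x r)) (nhdsWithin 0 (Set.Ioi 0)) (nhds 1)) :
    ∃ R, 0 < R ∧ R ≤ r ∧ (∀ y ∈ closedBall x R, gammaC n lam Lam * t ≤ u y) ∧
      deltaC n lam Lam * volume.real (closedBall x R) ≤
      volume.real {y ∈ closedBall x R | u y < t} := by
  have hδ := deltaC_pos hn hlam hLam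
  let P : ℕ → Prop := fun j => volume.real {y ∈ closedBall x (r * (1 / 2) ^ j) | u y < t} <
      deltaC n lam Lam * volume.real (closedBall x (r * (1 / 2) ^ j))
  have hle : ∀ j : ℕ, r * (1 / 2) ^ j ≤ r := fun j =>
    mul_le_of_le_one_right hr.le (pow_le_one₀ (by norm_num) (by norm_num))
  have hex : ∃ j, P j := by
    have htend : Tendsto (fun j : ℕ => r * (1 / 2 : ℝ) ^ j) atTop (nhdsWithin 0 (Set.Ioi 0)) := by
      rw [tendsto_nhdsWithin_iff]
      refine ⟨?_, Eventually.of_forall fun j => by show (0:ℝ) < _; positivity⟩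
      have := (tendsto_pow_atTop_nhds_zero_of_lt_one (r := (1/2:ℝ)) (by norm_num)
        (by norm_num)).const_mul r
      simpa using this
    have h1 : ENNReal.ofReal (1 - deltaC n lam Lam) < 1 := by
      rw [ENNReal.ofReal_lt_one]; linarith
    obtain ⟨j, hj⟩ := ((hdens.comp htend).eventually (lt_mem_nhds h1)).exists
    refine ⟨j, ?_⟩
    set ρ := r * (1 / 2 : ℝ) ^ j with hρ
    have hρ0 : 0 < ρ := by positivity
    have hcb : closedBall x ρ ⊆ ball 0 1 := cb_sub hx (by linarith [hle j])
    simp only [Function.comp] at hj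
    set E := {y ∈ ball (0 : Eucl n) 1 | t ≤ u y} with hE
    have hpos : 0 < volume (closedBall x ρ) := measure_closedBall_pos _ _ hρ0
    have hfin : volume (closedBall x ρ) ≠ ⊤ := measure_closedBall_lt_top.ne
    have h2 : ENNReal.ofReal (1 - deltaC n lam Lam) * volume (closedBall x ρ) <
        volume (E ∩ closedBall x ρ) := by
      rwa [ENNReal.lt_div_iff_mul_lt (Or.inl hpos.ne') (Or.inl hfin)] at hj
    have hEfin : volume (E ∩ closedBall x ρ) ≠ ⊤ := finite_sub_cb Set.inter_subset_right
    have h3 := ENNReal.toReal_strict_mono hEfin h2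
    rw [ENNReal.toReal_mul] at h3
    have h4 : (1 - deltaC n lam Lam) * volume.real (closedBall x ρ) <
        volume.real (E ∩ closedBall x ρ) := by
      refine lt_of_le_of_lt ?_ h3
      exact mul_le_mul_of_nonneg_right (by rw [ENNReal.toReal_ofReal']; exact le_max_left _ _)
        measureReal_nonneg
    have h5 : volume.real (closedBall x ρ ∩ E) + volume.real (closedBall x ρ \ E) =
      volume.real (closedBall x ρ) :=
      measureReal_inter_add_sdiff (meas_ge h.smooth.continuousOn t) hfin
    have h6 : {y ∈ closedBall x ρ | u y < t} = closedBall x ρ \ E := by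
      ext y
      simp only [hE, Set.mem_ofPred_eq, Set.mem_sdiff, not_and, not_le]
      exact ⟨fun hy => ⟨hy.1, fun _ => hy.2⟩, fun hy => ⟨hy.1, hy.2 (hcb hy.1)⟩⟩
    show volume.real {y ∈ closedBall x ρ | u y < t} < _
    rw [h6]
    rw [Set.inter_comm] at h5
    linarith
  classical
  have hj := Nat.find_spec hex
  have hj0 : Nat.find hex ≠ 0 := by
    intro h0
    rw [h0] at hj
    simp only [P, pow_zero, mul_one] at hj
    linarith
  obtain ⟨i, hi⟩ := Nat.exists_eq_succ_of_ne_zero hj0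
  have hni : ¬ P i := Nat.find_min hex (by omega)
  rw [hi] at hj
  refine ⟨r * (1 / 2) ^ i, by positivity, hle i, ?_, by simpa [P] using hni⟩
  have h2 := spread hn hlam hLam h (by positivity) ht ?_ hj
  · have e : 2 * (r * (1 / 2 : ℝ) ^ (i.succ)) = r * (1 / 2) ^ i := by
      rw [pow_succ]; ring
    rwa [e] at h2
  · exact cb_sub hx (by linarith [hle i.succ])

lemma growth {n : ℕ} (hn : 2 ≤ n) {lam Lam : ℝ} (hlam : 0 < lam) (hLam : 0 < Lam)
    {A : Eucl n → Matrix (Fin n) (Fin n) ℝ}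
    {u : Eucl n → ℝ} (h : IsSup lam Lam A u) {s r t : ℝ} (hr : 0 < r) (ht : 0 < t)
    (hrs : 4 * r ≤ s)
    (hno : ∀ x ∈ ball (0 : Eucl n) (1 - s), deltaC n lam Lam * volume.real (closedBall x r) ≤
      volume.real {y ∈ closedBall x r | u y < t}) :
    deltaC n lam Lam * (1 / 5) ^ n * volume.real {y ∈ ball (0 : Eucl n) (1 - s) | t ≤ u y} +
      volume.real {y ∈ ball (0 : Eucl n) 1 | t ≤ u y} ≤
      volume.real {y ∈ ball (0 : Eucl n) 1 | gammaC n lam Lam * t ≤ u y} := by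
  have hδ := deltaC_pos hn hlam hLam
  have hγ := gammaC_pos hn hlam hLam
  have hγ1 := gammaC_lt hn hlam hLam
  have hc := h.smooth.continuousOn
  set δ := deltaC n lam Lam
  set γ := gammaC n lam Lam
  set E := {y ∈ ball (0 : Eucl n) 1 | t ≤ u y} with hE
  set E' := {y ∈ ball (0 : Eucl n) (1 - s) | t ≤ u y} with hE'
  set F := {y ∈ ball (0 : Eucl n) 1 | γ * t ≤ u y} with hF
  have hEm : MeasurableSet E := meas_ge hc t
  have hss : ball (0 : Eucl n) (1 - s) ⊆ ball 0 1 := ball_subset_ball (by linarith)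
  have hdens := Besicovitch.ae_tendsto_measure_inter_div_of_measurableSet
    (volume : Measure (Eucl n)) hEm
  set D : Set (Eucl n) := {x | Tendsto (fun r => volume (E ∩ closedBall x r) /
      volume (closedBall x r)) (nhdsWithin 0 (Set.Ioi 0)) (nhds (E.indicator 1 x))} with hD
  set G := E' ∩ D with hG
  have hGvol : volume E' ≤ volume G := by
    have : volume (Dᶜ) = 0 := hdens
    calc volume E' ≤ volume (G ∪ Dᶜ) := measure_mono fun x hx => by
          by_cases hxD : x ∈ D
          · exact Or.inl ⟨hx, hxD⟩
          · exact Or.inr hxD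
      _ ≤ volume G + volume Dᶜ := measure_union_le _ _
      _ = volume G := by rw [this, add_zero]
  have hgood : ∀ x : Eucl n, ∃ R, x ∈ G → 0 < R ∧ R ≤ r ∧ (∀ y ∈ closedBall x R, γ * t ≤ u y) ∧
      δ * volume.real (closedBall x R) ≤ volume.real {y ∈ closedBall x R | u y < t} := by
    intro x
    by_cases hx : x ∈ G
    · have h1 : x ∈ E := ⟨hss hx.1.1, hx.1.2⟩
      have h2 := hx.2
      simp only [hD, Set.mem_ofPred_eq, Set.indicator_of_mem h1, Pi.one_apply] at h2
      obtain ⟨R, hR⟩ := good_radius hn hlam hLam h hr ht hrs hx.1.1 (hno x hx.1.1) h2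
      exact ⟨R, fun _ => hR⟩
    · exact ⟨0, fun h => absurd h hx⟩
  choose R hR using hgood
  obtain ⟨v, hvG, hvd, hvc⟩ := Vitali.exists_disjoint_subfamily_covering_enlargement_closedBall
    G id R r (fun a ha => (hR a ha).2.1) 5 (by norm_num)
  simp only [id] at hvd hvc
  have hvcount : v.Countable := by
    refine hvd.countable_of_nonempty_interior fun b hb => ?_
    exact ⟨b, ball_subset_interior_closedBall (mem_ball_self (hR b (hvG hb)).1)⟩
  let bad : Eucl n → Set (Eucl n) := fun b => {y ∈ closedBall b (R b) | u y < t}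
  have hbb : ∀ b ∈ v, closedBall b (R b) ⊆ ball 0 1 := fun b hb =>
    cb_sub (hvG hb).1.1 (by linarith [(hR b (hvG hb)).2.1])
  have hbadm : ∀ b ∈ v, MeasurableSet (bad b) := by
    intro b hb
    have : bad b = closedBall b (R b) ∩ {y ∈ ball (0 : Eucl n) 1 | u y < t} := by
      ext y
      simp only [bad, Set.mem_ofPred_eq, Set.mem_inter_iff]
      exact ⟨fun hy => ⟨hy.1, hbb b hb hy.1, hy.2⟩, fun hy => ⟨hy.1, hy.2.2⟩⟩
    rw [this]
    exact measurableSet_closedBall.inter (meas_lt hc t)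
  have hcover : G ⊆ ⋃ b ∈ v, closedBall b (5 * R b) := by
    intro x hx
    obtain ⟨b, hb, hsub⟩ := hvc x hx
    exact Set.mem_biUnion hb (hsub (mem_closedBall_self (hR x hx).1.le))
  have hbadsub : (⋃ b ∈ v, bad b) ⊆ F \ E := by
    intro y hy
    simp only [Set.mem_iUnion] at hy
    obtain ⟨b, hb, hyb⟩ := hy
    exact ⟨⟨hbb b hb hyb.1, (hR b (hvG hb)).2.2.1 y hyb.1⟩, fun hyE => absurd hyE.2 (not_le.mpr hyb.2)⟩
  have hone : ∀ b ∈ v, ENNReal.ofReal (δ * (1 / 5) ^ n) * volume (closedBall b (5 * R b)) ≤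
      volume (bad b) := by
    intro b hb
    obtain ⟨h1, h2, h3, h4⟩ := hR b (hvG hb)
    have hf1 : volume (closedBall b (5 * R b)) ≠ ⊤ := measure_closedBall_lt_top.ne
    have hf2 : volume (bad b) ≠ ⊤ := finite_sub_cb (fun y hy => hy.1)
    rw [← ENNReal.ofReal_toReal hf1, ← ENNReal.ofReal_toReal hf2,
      ← ENNReal.ofReal_mul (by positivity)]
    refine ENNReal.ofReal_le_ofReal (le_trans (le_of_eq ?_) h4)
    change δ * (1 / 5) ^ n * volume.real (closedBall b (5 * R b)) = _
    rw [vol_cb _ (by positivity), vol_cb _ h1.le, mul_pow]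
    have : (1 / 5 : ℝ) ^ n * 5 ^ n = 1 := by rw [← mul_pow]; norm_num
    linear_combination (δ * R b ^ n * volume.real (ball (0 : Eucl n) 1)) * this
  have hmain : ENNReal.ofReal (δ * (1 / 5) ^ n) * volume E' ≤ volume (F \ E) := by
    calc ENNReal.ofReal (δ * (1 / 5) ^ n) * volume E'
        ≤ ENNReal.ofReal (δ * (1 / 5) ^ n) * volume (⋃ b ∈ v, closedBall b (5 * R b)) := by
          refine mul_le_mul_right ?_ _; exact hGvol.trans (measure_mono hcover)
      _ ≤ ENNReal.ofReal (δ * (1 / 5) ^ n) * ∑' b : v, volume (closedBall (b : Eucl n) (5 * R b)) := by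
          gcongr; exact measure_biUnion_le _ hvcount _
      _ = ∑' b : v, ENNReal.ofReal (δ * (1 / 5) ^ n) * volume (closedBall (b : Eucl n) (5 * R b)) :=
          ENNReal.tsum_mul_left.symm
      _ ≤ ∑' b : v, volume (bad b) := ENNReal.tsum_le_tsum fun b => hone b b.2
      _ = volume (⋃ b ∈ v, bad b) := by
          rw [measure_biUnion hvcount _ hbadm]
          exact hvd.mono fun b y hy => hy.1
      _ ≤ volume (F \ E) := measure_mono hbadsub
  have hFfin : volume F ≠ ⊤ :=
    finite_sub_cb (x := 0) (r := 1) fun y hy => ball_subset_closedBall hy.1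
  have hEF : E ⊆ F := fun y hy => ⟨hy.1, le_trans (by nlinarith) hy.2⟩
  have hm2 := ENNReal.toReal_mono (measure_ne_top_of_subset Set.sdiff_subset hFfin) hmain
  rw [ENNReal.toReal_mul, ENNReal.toReal_ofReal (by positivity)] at hm2
  have h5 : volume.real (F ∩ E) + volume.real (F \ E) = volume.real F :=
    measureReal_inter_add_sdiff hEm hFfin
  rw [Set.inter_eq_right.mpr hEF] at h5
  change δ * (1 / 5) ^ n * volume.real E' ≤ volume.real (F \ E) at hm2
  linarith

lemma chain {n : ℕ} (hn : 2 ≤ n) {lam Lam : ℝ} (hlam : 0 < lam) (hLam : 0 < Lam)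
    {A : Eucl n → Matrix (Fin n) (Fin n) ℝ}
    {u : Eucl n → ℝ} (h : IsSup lam Lam A u) {s r m : ℝ} (hr : 0 < r) (hm : 0 < m)
    (hs : 0 < s) (hrs : 4 * r ≤ s) {N : ℕ} (hN : 2 ≤ N * r)
    {x y : Eucl n} (hx : x ∈ ball (0 : Eucl n) (1 - s)) (hy : y ∈ ball (0 : Eucl n) (1 - s))
    (hu : ∀ z ∈ closedBall x r, m ≤ u z) : m * betaC n lam Lam ^ N ≤ u y := by
  have hβ := betaC_pos hn hlam hLam
  have hN0 : (0:ℝ) < N := by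
    by_contra hc
    have : (N:ℝ) = 0 := le_antisymm (not_lt.mp hc) (by positivity)
    rw [this] at hN; linarith
  have hxy : ‖y - x‖ ≤ 2 := by
    rw [mem_ball, dist_zero_right] at hx hy
    linarith [norm_sub_le y x]
  have key : ∀ i : ℕ, i ≤ N → ∀ z ∈ closedBall (x + ((i:ℝ) / N) • (y - x)) r,
      m * betaC n lam Lam ^ i ≤ u z := by
    intro i
    induction i with
    | zero => intro _; simpa using hu
    | succ i ih =>
      intro hi z hz
      have hiN : (i:ℝ) + 1 ≤ N := by exact_mod_cast hi
      have hpt : x + ((i:ℝ) / N) • (y - x) ∈ ball (0 : Eucl n) (1 - s) := by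
        refine (convex_ball (0 : Eucl n) (1 - s)).add_smul_sub_mem hx hy ⟨by positivity, ?_⟩
        rw [div_le_one hN0]; linarith
      have h1 := doubling hn hlam hLam h hr (by positivity) (cb_sub hpt hrs) (ih (by omega))
      rw [pow_succ, ← mul_assoc]
      refine h1 z ?_
      refine closedBall_subset_closedBall' ?_ hz
      have h2 : dist (x + (((i + 1 : ℕ):ℝ) / N) • (y - x)) (x + ((i:ℝ) / N) • (y - x)) ≤ r := by
        rw [dist_eq_norm, add_sub_add_left_eq_sub, ← sub_smul, norm_smul]
        have : (((i + 1 : ℕ):ℝ) / N) - (i:ℝ) / N = 1 / N := by push_cast; ring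
        rw [this, Real.norm_eq_abs, abs_of_pos (by positivity), one_div, inv_mul_le_iff₀ hN0]
        linarith
      linarith
  refine key N le_rfl y ?_
  rw [div_self hN0.ne', one_smul, add_sub_cancel]
  exact mem_closedBall_self hr.le


/-- **Weak Harnack inequality for subsolutions, non-divergence form (Krylov–Safonov,
Theorem 1.2)**: for every `η > 0` there is `c(η) ∈ (0,1)` depending only on `η, n, λ, Λ`
such that any `C²` subsolution `φ` of `tr(A D²φ) ≥ 0` in `B_1` with `φ ≤ 1` in `B_1` and
`|{φ ≤ 0}| ≥ η` satisfies `φ ≤ 1 - c(η)` in `B_{1/2}`. -/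
theorem weak_harnack_nondivergence (n : ℕ) (hn : 2 ≤ n) (lam Lam : ℝ)
    (hlam : 0 < lam) (hlL : lam ≤ Lam) (η : ℝ) (hη : 0 < η) :
    ∃ c : ℝ, 0 < c ∧ c < 1 ∧
      ∀ A : Eucl n → Matrix (Fin n) (Fin n) ℝ,
        UnifElliptic lam Lam (ball (0 : Eucl n) 1) A →
        ∀ φ : Eucl n → ℝ, NondivSubsolution A (ball (0 : Eucl n) 1) φ →
          (∀ x ∈ ball (0 : Eucl n) 1, φ x ≤ 1) →
          ENNReal.ofReal η ≤ volume {x ∈ ball (0 : Eucl n) 1 | φ x ≤ 0} →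
          ∀ x ∈ ball (0 : Eucl n) (1 / 2), φ x ≤ 1 - c := by
  have hLam : 0 < Lam := hlam.trans_le hlL
  have hβ := betaC_pos hn hlam hLam
  have hβ1 := betaC_le hn hlam hLam
  have hγ := gammaC_pos hn hlam hLam
  have hγ1 := gammaC_lt hn hlam hLam
  have hδ := deltaC_pos hn hlam hLam
  have hω := omega_pos n
  have hn0 : (0:ℝ) < n := by positivity
  set δ := deltaC n lam Lam with hδdef
  set γ := gammaC n lam Lam with hγdef
  set β := betaC n lam Lam with hβdef
  set ω := volume.real (ball (0 : Eucl n) 1) with hωdef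
  obtain ⟨s, hs0, hs1, hs2⟩ : ∃ s : ℝ, 0 < s ∧ s ≤ 1 / 2 ∧ n * s * ω ≤ η / 2 := by
    refine ⟨min (1 / 2) (η / (2 * n * ω)), by positivity, min_le_left _ _, ?_⟩
    calc n * min (1 / 2) (η / (2 * n * ω)) * ω ≤ n * (η / (2 * n * ω)) * ω := by
          gcongr; exact min_le_right _ _
      _ = η / 2 := by field_simp
  set r := s / 4 with hr
  have hr0 : 0 < r := by positivity
  have hrs : 4 * r ≤ s := by rw [hr]; linarith
  set θ := δ * (1 / 5) ^ n * (η / 2) with hθ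
  have hθ0 : 0 < θ := by positivity
  obtain ⟨K, hK⟩ := exists_nat_gt (ω / θ)
  rw [div_lt_iff₀ hθ0] at hK
  obtain ⟨N, hN⟩ := exists_nat_gt (2 / r)
  rw [div_lt_iff₀ hr0] at hN
  have hgK : γ ^ K ≤ 1 := pow_le_one₀ hγ.le hγ1.le
  have hbN : β ^ N ≤ 1 := pow_le_one₀ hβ.le hβ1
  refine ⟨γ ^ K * β ^ N / 2, by positivity, ?_, ?_⟩
  · have : γ ^ K * β ^ N ≤ 1 := mul_le_one₀ hgK (by positivity) hbN
    linarith
  intro A hA φ hφ hφ1 hvol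
  set u : Eucl n → ℝ := fun x => 1 - φ x with hu
  have hsup : IsSup lam Lam A u := by
    refine ⟨hA, contDiffOn_const.sub hφ.1, fun x hx => by simp only [hu]; linarith [hφ1 x hx], ?_⟩
    intro x hx
    have h1 := hφ.2 x hx
    have h2 : ∀ i j, hess u x i j = - fderiv ℝ (fun y => fderiv ℝ φ y (EuclideanSpace.single i 1)) x
        (EuclideanSpace.single j 1) := by
      intro i j
      unfold hess
      have : (fun y => fderiv ℝ u y (EuclideanSpace.single i 1)) =
          fun y => - fderiv ℝ φ y (EuclideanSpace.single i 1) := by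
        funext y
        simp only [hu, fderiv_const_sub]
        simp
      rw [this, fderiv_fun_neg]
      simp
    simp only [h2, mul_neg, Finset.sum_neg_distrib]
    linarith
  have hset : {x ∈ ball (0 : Eucl n) 1 | φ x ≤ 0} = {x ∈ ball (0 : Eucl n) 1 | 1 ≤ u x} := by
    ext x; simp [hu]
  rw [hset] at hvol
  have hfin : ∀ t, volume {x ∈ ball (0 : Eucl n) 1 | t ≤ u x} ≠ ⊤ := fun t =>
    finite_sub_cb (x := 0) (r := 1) fun y hy => ball_subset_closedBall hy.1
  have hvol1 : η ≤ volume.real {x ∈ ball (0 : Eucl n) 1 | 1 ≤ u x} :=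
    (ENNReal.ofReal_le_iff_le_toReal (hfin 1)).mp hvol
  have hvol2 : η / 2 ≤ volume.real {x ∈ ball (0 : Eucl n) (1 - s) | 1 ≤ u x} := by
    have hsub : {x ∈ ball (0 : Eucl n) 1 | 1 ≤ u x} ⊆
        {x ∈ ball (0 : Eucl n) (1 - s) | 1 ≤ u x} ∪ (ball 0 1 \ ball 0 (1 - s)) := by
      intro x hx
      by_cases hxs : x ∈ ball (0 : Eucl n) (1 - s)
      · exact Or.inl ⟨hxs, hx.2⟩
      · exact Or.inr ⟨hx.1, hxs⟩
    have hss : ball (0 : Eucl n) (1 - s) ⊆ ball 0 1 := ball_subset_ball (by linarith)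
    have hfb : volume (ball (0 : Eucl n) 1) ≠ ⊤ := measure_ball_lt_top.ne
    have h1 : volume.real {x ∈ ball (0 : Eucl n) 1 | 1 ≤ u x} ≤ 
        volume.real {x ∈ ball (0 : Eucl n) (1 - s) | 1 ≤ u x} +
          volume.real (ball (0 : Eucl n) 1 \ ball 0 (1 - s)) := by
      refine (measureReal_mono hsub ?_).trans (measureReal_union_le _ _)
      refine finite_sub_cb (x := 0) (r := 1) (Set.union_subset ?_ ?_)
      · exact fun y hy => ball_subset_closedBall (hss hy.1)
      · exact fun y hy => ball_subset_closedBall hy.1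
    have h2 : volume.real (ball (0 : Eucl n) 1 ∩ ball 0 (1 - s)) +
        volume.real (ball (0 : Eucl n) 1 \ ball 0 (1 - s)) = ω :=
      measureReal_inter_add_sdiff measurableSet_ball hfb
    rw [Set.inter_eq_right.mpr hss, vol_b _ (by linarith : (0:ℝ) < 1 - s)] at h2
    have h3 : 1 - n * s ≤ (1 - s) ^ n := by
      have := one_add_mul_le_pow (a := -s) (by linarith) n
      have e : 1 + -s = 1 - s := by ring
      rw [e] at this
      linarith
    have h4 : (1 - n * s) * ω ≤ (1 - s) ^ n * ω := by gcongr
    linarith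
  have hex : ∃ k < K, ∃ x ∈ ball (0 : Eucl n) (1 - s),
      volume.real {y ∈ closedBall x r | u y < γ ^ k} < δ * volume.real (closedBall x r) := by
    by_contra hcon
    push Not at hcon
    have hgrow : ∀ k : ℕ, k ≤ K → k * θ ≤ volume.real {x ∈ ball (0 : Eucl n) 1 | γ ^ k ≤ u x} := by
      intro k
      induction k with
      | zero => intro _; simp
      | succ k ih =>
        intro hk
        have h1 := ih (by omega)
        have h2 := growth hn hlam hLam hsup hr0 (pow_pos hγ k) hrs (hcon k (by omega))
        have h3 : volume.real {x ∈ ball (0 : Eucl n) (1 - s) | 1 ≤ u x} ≤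
            volume.real {x ∈ ball (0 : Eucl n) (1 - s) | γ ^ k ≤ u x} := by
          refine measureReal_mono (fun x hx => ⟨hx.1, le_trans (pow_le_one₀ hγ.le hγ1.le) hx.2⟩) ?_
          exact finite_sub_cb (x := 0) (r := 1 - s) fun y hy => ball_subset_closedBall hy.1
        have h4 : θ ≤ δ * (1 / 5) ^ n *
            volume.real {x ∈ ball (0 : Eucl n) (1 - s) | γ ^ k ≤ u x} := by
          rw [hθ]; gcongr; exact hvol2.trans h3
        rw [pow_succ, mul_comm (γ ^ k) γ]
        push_cast
        linarith
    have h1 := hgrow K le_rfl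
    have h2 : volume.real {x ∈ ball (0 : Eucl n) 1 | γ ^ K ≤ u x} ≤ ω :=
      measureReal_mono (fun x hx => hx.1) measure_ball_lt_top.ne
    linarith
  obtain ⟨k, hkK, x, hx, hd⟩ := hex
  have hspread := spread hn hlam hLam hsup hr0 (pow_pos hγ k) (cb_sub hx hrs) hd
  intro y hy
  have hy' : y ∈ ball (0 : Eucl n) (1 - s) := ball_subset_ball (by linarith) hy
  have hch := chain hn hlam hLam hsup hr0 (m := γ * γ ^ k) (by positivity) hs0 hrs hN.le hx hy'
    (fun z hz => hspread z (closedBall_subset_closedBall (by linarith) hz))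
  have h1 : γ ^ K ≤ γ * γ ^ k := by
    rw [← pow_succ']
    exact pow_le_pow_of_le_one hγ.le hγ1.le hkK
  have h2 : γ ^ K * β ^ N ≤ γ * γ ^ k * β ^ N := by gcongr
  have h3 : 0 ≤ γ ^ K * β ^ N := by positivity
  have h4 : u y = 1 - φ y := rfl
  linarith

end
end

section
/- Local maximum principle with L^p norms, non-divergence form: For every p > 0 there exists C(p) > 0, depending only on p, n, λ, Λ, such that the following holds. Let A be uniformly elliptic on the unit ball B_1 ⊂ ℝ^n and let φ ∈ C²(B_1) satisfy tr(A(x) D²φ(x)) ≥ 0 for all x ∈ B_1. Then sup_{B_{1/2}} φ⁺ ≤ C(p) (∫_{B_1} (φ⁺)^p dx)^{1/p}, where φ⁺ = max(φ, 0). -/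
open MeasureTheory Metric Filter

noncomputable section

lemma quad_bound {n : ℕ} (lam Lam : ℝ) (A : Matrix (Fin n) (Fin n) ℝ)
    (hA : ∀ ξ : Eucl n,
    lam * ‖ξ‖ ^ 2 ≤ ∑ i, ξ i * ∑ j, A i j * ξ j ∧
    Real.sqrt (∑ i, (∑ j, A i j * ξ j) ^ 2) ≤ Lam * ‖ξ‖) (a b : Eucl n) :
    ∑ i, ∑ j, A i j * (a i * b j) ≤ Lam * ‖a‖ * ‖b‖ := by
  have h1 : ∑ i, ∑ j, A i j * (a i * b j) = ∑ i, a i * (∑ j, A i j * b j) := by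
    refine Finset.sum_congr rfl fun i _ => ?_
    rw [Finset.mul_sum]
    exact Finset.sum_congr rfl fun j _ => by ring
  rw [h1]
  refine (Real.sum_mul_le_sqrt_mul_sqrt _ _ _).trans ?_
  have h2 : Real.sqrt (∑ i, a i ^ 2) = ‖a‖ := by
    rw [EuclideanSpace.norm_eq]; simp
  rw [h2]
  have := mul_le_mul_of_nonneg_left (hA b).2 (norm_nonneg a)
  linarith

open scoped MatrixOrder ComplexOrder in
lemma det_bound {n : ℕ} (lam T : ℝ) (hlam : 0 < lam) (A N : Matrix (Fin n) (Fin n) ℝ)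
    (hA : ∀ ξ : Eucl n, lam * ‖ξ‖ ^ 2 ≤ ∑ i, ξ i * ∑ j, A i j * ξ j)
    (hN : N.PosSemidef) (hT : ∑ i, ∑ j, A i j * N i j ≤ T) :
    |N.det| ≤ (T / lam) ^ n := by
  have htr : lam * N.trace ≤ T := by
    refine le_trans ?_ hT
    obtain ⟨B, hB⟩ := CStarAlgebra.nonneg_iff_eq_star_mul_self.mp hN.nonneg
    have hNij : ∀ i j, N i j = ∑ k, B k i * B k j := by
      intro i j; rw [hB]; simp [Matrix.mul_apply, Matrix.star_eq_conjTranspose]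
    have h1 : ∑ i, ∑ j, A i j * N i j = ∑ k, ∑ i, B k i * ∑ j, A i j * B k j := by
      rw [Finset.sum_comm]
      rw [Finset.sum_comm]
      rw [Finset.sum_comm (s := Finset.univ (α := Fin n)) (f := fun k i => B k i * ∑ j, A i j * B k j)]
      refine Finset.sum_congr rfl fun i _ => ?_
      simp_rw [hNij, Finset.mul_sum]
      rw [Finset.sum_comm]
      exact Finset.sum_congr rfl fun j _ => Finset.sum_congr rfl fun k _ => by ring
    rw [h1]
    have h2 : N.trace = ∑ k, ∑ i, B k i ^ 2 := by
      rw [Finset.sum_comm]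
      simp [Matrix.trace, hNij, sq]
    rw [h2, Finset.mul_sum]
    refine Finset.sum_le_sum fun k _ => ?_
    have := hA (WithLp.toLp 2 (B k))
    rw [EuclideanSpace.norm_sq_eq] at this
    simpa using this
  have he := hN.eigenvalues_nonneg
  have htr2 : N.trace = ∑ i, hN.1.eigenvalues i := by
    simpa using hN.1.trace_eq_sum_eigenvalues
  have hdet : N.det = ∏ i, hN.1.eigenvalues i := by
    simpa using hN.1.det_eq_prod_eigenvalues
  have h3 : N.trace ≤ T / lam := by rw [le_div_iff₀ hlam]; linarith
  rw [hdet, abs_of_nonneg (Finset.prod_nonneg fun i _ => he i)]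
  calc ∏ i, hN.1.eigenvalues i ≤ ∏ i : Fin n, (T / lam) := by
        refine Finset.prod_le_prod (fun i _ => he i) fun i _ => ?_
        refine le_trans ?_ h3
        rw [htr2]
        exact Finset.single_le_sum (f := fun i => hN.1.eigenvalues i) (fun j _ => he j) (Finset.mem_univ i)
    _ = _ := by rw [Finset.prod_const]; simp

lemma hess_apply_s4 {n : ℕ} {v : Eucl n → ℝ} {x : Eucl n} (hv : ContDiffAt ℝ 2 v x) (a b : Eucl n) :
    fderiv ℝ (fun y => fderiv ℝ v y a) x b = fderiv ℝ (fderiv ℝ v) x b a := by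
  have h : DifferentiableAt ℝ (fderiv ℝ v) x :=
    (hv.fderiv_right (m := 1) (by norm_num)).differentiableAt (by norm_num)
  rw [fderiv_clm_apply h (differentiableAt_const a)]
  simp

lemma hess_symm_s4 {n : ℕ} {v : Eucl n → ℝ} {x : Eucl n} (hv : ContDiffAt ℝ 2 v x) (a b : Eucl n) :
    fderiv ℝ (fderiv ℝ v) x b a = fderiv ℝ (fderiv ℝ v) x a b :=
  (hv.isSymmSndFDerivAt (by simp)) b a

lemma second_order {n : ℕ} {v : Eucl n → ℝ} {x : Eucl n} (hv : ContDiffAt ℝ 2 v x)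
    (l : Eucl n →L[ℝ] ℝ) (hmax : IsLocalMax (fun y => v y - l y) x) (ξ : Eucl n) :
    fderiv ℝ v x = l ∧ fderiv ℝ (fderiv ℝ v) x ξ ξ ≤ 0 := by
  have hd : DifferentiableAt ℝ v x := hv.differentiableAt (by norm_num)
  have h0 : fderiv ℝ v x = l := by
    have := hmax.fderiv_eq_zero
    rw [fderiv_fun_sub hd l.differentiableAt, l.fderiv] at this
    exact sub_eq_zero.mp this
  refine ⟨h0, ?_⟩
  by_contra! hpos
  have hdd : DifferentiableAt ℝ (fderiv ℝ v) x :=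
    (hv.fderiv_right (m := 1) (by norm_num)).differentiableAt (by norm_num)
  let c : ℝ → Eucl n := fun t => x + t • ξ
  have hc : ∀ t, HasDerivAt c ξ t := by
    intro t
    have := ((hasDerivAt_id t).smul_const ξ).const_add x
    rw [one_smul] at this
    exact this
  have hc0 : c 0 = x := by simp [c]
  have hcc : ContinuousAt c 0 := (hc 0).continuousAt
  let h : ℝ → ℝ := fun t => v (c t) - l (c t)
  have hev : ∀ᶠ y in nhds x, DifferentiableAt ℝ v y := by
    have := hv.eventually (by simp)
    filter_upwards [this] with y hy using hy.differentiableAt (by norm_num)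
  have hev' : ∀ᶠ t in nhds (0:ℝ), DifferentiableAt ℝ v (c t) := by
    apply hcc.eventually; rwa [hc0]
  have hder : deriv h =ᶠ[nhds 0] fun t => fderiv ℝ v (c t) ξ - l ξ := by
    filter_upwards [hev'] with t ht
    exact ((ht.hasFDerivAt.comp_hasDerivAt t (hc t)).sub
      (l.hasFDerivAt.comp_hasDerivAt t (hc t))).deriv
  have hder2 : deriv (deriv h) 0 = fderiv ℝ (fderiv ℝ v) x ξ ξ := by
    rw [hder.deriv_eq]
    have h1 : HasDerivAt (fun t => fderiv ℝ v (c t)) (fderiv ℝ (fderiv ℝ v) x ξ) 0 := by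
      have h2 : HasFDerivAt (fderiv ℝ v) (fderiv ℝ (fderiv ℝ v) x) (c 0) := by
        rw [hc0]; exact hdd.hasFDerivAt
      exact h2.comp_hasDerivAt 0 (hc 0)
    have h3 := (h1.clm_apply (hasDerivAt_const (0:ℝ) ξ)).sub_const (l ξ)
    simpa using h3.deriv
  have hder0 : deriv h 0 = 0 := by
    rw [hder.eq_of_nhds, hc0, h0]; simp
  have hcont : ContinuousAt h 0 := by
    have h4 : ContinuousAt v (c 0) := by rw [hc0]; exact hd.continuousAt
    exact (ContinuousAt.comp h4 hcc).sub (l.continuous.continuousAt.comp hcc)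
  have hmin : IsLocalMin h 0 := isLocalMin_of_deriv_deriv_pos (by rw [hder2]; exact hpos) hder0 hcont
  have hmx : IsLocalMax h 0 := by
    have : ∀ᶠ y in nhds (c 0), v y - l y ≤ v x - l x := by rw [hc0]; exact hmax
    have h5 := hcc.eventually this
    filter_upwards [h5] with t ht
    simpa [h, hc0] using ht
  have heq : h =ᶠ[nhds 0] fun _ => h 0 := by
    filter_upwards [hmin, hmx] with t h1 h2 using le_antisymm h2 h1
  have : deriv (deriv h) 0 = 0 := by
    have := heq.deriv.deriv_eq
    rw [this]; simp
  rw [hder2] at this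
  linarith

def WW {n : ℕ} (x : Eucl n) : ℝ := (3/4)^2 - ‖x‖^2

def VV {n : ℕ} (k : ℕ) (u : Eucl n → ℝ) (x : Eucl n) : ℝ := WW x ^ (k+2) * u x

lemma WW_hasFDerivAt {n : ℕ} (x : Eucl n) :
    HasFDerivAt (WW (n := n)) (-(2 • innerSL ℝ x)) x := by
  have := (hasStrictFDerivAt_norm_sq x).hasFDerivAt.const_sub ((3/4:ℝ)^2)
  exact this

lemma WW_contDiff {n : ℕ} : ContDiff ℝ 2 (WW (n := n)) := by
  unfold WW
  exact contDiff_const.sub (contDiff_norm_sq ℝ)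

lemma VV_contDiffAt {n : ℕ} (k : ℕ) {u : Eucl n → ℝ} {x : Eucl n} (hu : ContDiffAt ℝ 2 u x) :
    ContDiffAt ℝ 2 (VV k u) x := by
  unfold VV
  exact (WW_contDiff.contDiffAt.pow _).mul hu

lemma grad_VV {n : ℕ} (k : ℕ) {u : Eucl n → ℝ} {x : Eucl n} (hu : DifferentiableAt ℝ u x)
    (i : Fin n) :
    fderiv ℝ (VV k u) x (EuclideanSpace.single i 1) =
      WW x ^ (k+2) * fderiv ℝ u x (EuclideanSpace.single i 1)
        - 2 * (k+2) * WW x ^ (k+1) * x i * u x := by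
  have h1 := ((WW_hasFDerivAt x).pow (k+2)).mul hu.hasFDerivAt
  have h2 : HasFDerivAt (VV k u) _ x := h1
  rw [h2.fderiv]
  simp [EuclideanSpace.inner_single_right]
  ring

lemma hess_VV {n : ℕ} (k : ℕ) {u : Eucl n → ℝ} {x : Eucl n} (hu : ContDiffAt ℝ 2 u x)
    (i j : Fin n) :
    fderiv ℝ (fun y => fderiv ℝ (VV k u) y (EuclideanSpace.single i 1)) x
        (EuclideanSpace.single j 1) =
      WW x ^ (k+2) * fderiv ℝ (fun y => fderiv ℝ u y (EuclideanSpace.single i 1)) x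
        (EuclideanSpace.single j 1)
      - 2 * (k+2) * WW x ^ (k+1) * (x i * fderiv ℝ u x (EuclideanSpace.single j 1))
      - 2 * (k+2) * WW x ^ (k+1) * (fderiv ℝ u x (EuclideanSpace.single i 1) * x j)
      - 2 * (k+2) * WW x ^ (k+1) * u x * (if i = j then 1 else 0)
      + 4 * (k+2) * (k+1) * WW x ^ k * u x * (x i * x j) := by
  have hev : (fun y => fderiv ℝ (VV k u) y (EuclideanSpace.single i 1)) =ᶠ[nhds x]
      fun y => WW y ^ (k+2) * fderiv ℝ u y (EuclideanSpace.single i 1)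
        - 2 * (k+2) * (WW y ^ (k+1) * (y i * u y)) := by
    filter_upwards [hu.eventually (by simp)] with y hy
    rw [grad_VV k (hy.differentiableAt (by norm_num))]
    ring
  rw [hev.fderiv_eq]
  have hd : DifferentiableAt ℝ u x := hu.differentiableAt (by norm_num)
  have hdd : DifferentiableAt ℝ (fun y => fderiv ℝ u y (EuclideanSpace.single i 1)) x := by
    have h : DifferentiableAt ℝ (fderiv ℝ u) x :=
      (hu.fderiv_right (m := 1) (by norm_num)).differentiableAt (by norm_num)
    exact h.clm_apply (differentiableAt_const _)
  have hp : HasFDerivAt (fun y : Eucl n => y i) (EuclideanSpace.proj i : Eucl n →L[ℝ] ℝ) x :=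
    (EuclideanSpace.proj i : Eucl n →L[ℝ] ℝ).hasFDerivAt
  have h1 := (((WW_hasFDerivAt x).pow (k+2)).mul hdd.hasFDerivAt).sub
    ((((WW_hasFDerivAt x).pow (k+1)).mul (hp.mul hd.hasFDerivAt)).const_mul (2 * ((k:ℝ)+2)))
  refine (congrArg (fun L : Eucl n →L[ℝ] ℝ => L (EuclideanSpace.single j 1)) h1.fderiv).trans ?_
  simp [EuclideanSpace.inner_single_right]
  split_ifs <;> ring

lemma tr_bound {n : ℕ} (lam Lam : ℝ) (hlam : 0 < lam) (hlL : lam ≤ Lam)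
    (A : Matrix (Fin n) (Fin n) ℝ)
    (hA : ∀ ξ : Eucl n,
    lam * ‖ξ‖ ^ 2 ≤ ∑ i, ξ i * ∑ j, A i j * ξ j ∧
    Real.sqrt (∑ i, (∑ j, A i j * ξ j) ^ 2) ≤ Lam * ‖ξ‖)
    (k : ℕ) {u : Eucl n → ℝ} {x : Eucl n} (hu : ContDiffAt ℝ 2 u x) (hx : ‖x‖ < 3/4)
    (hpos : 0 < u x)
    (hsub : 0 ≤ ∑ i, ∑ j, A i j *
      fderiv ℝ (fun y => fderiv ℝ u y (EuclideanSpace.single i 1)) x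
        (EuclideanSpace.single j 1))
    (g : Eucl n) (hg : ∀ i, g i = fderiv ℝ (VV k u) x (EuclideanSpace.single i 1))
    (hgn : ‖g‖ * (3/4 - ‖x‖) ≤ VV k u x) :
    ∑ i, ∑ j, A i j * (-
      fderiv ℝ (fun y => fderiv ℝ (VV k u) y (EuclideanSpace.single i 1)) x
        (EuclideanSpace.single j 1)) ≤
      Lam * (2 * (k+2) * n + 8 * (k+2) * (k+3)) * (u x * WW x ^ k) := by
  have hLam : 0 < Lam := hlam.trans_le hlL
  set w := WW x with hw
  have hxn := norm_nonneg x
  have hww : w = (3/4 - ‖x‖) * (3/4 + ‖x‖) := by rw [hw, WW]; ring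
  have hwpos : 0 < w := by rw [hww]; apply mul_pos <;> linarith
  have hw1 : w ≤ 1 := by rw [hw, WW]; nlinarith
  let a : Eucl n := WithLp.toLp 2 fun i => fderiv ℝ u x (EuclideanSpace.single i 1)
  have hai : ∀ i, fderiv ℝ u x (EuclideanSpace.single i 1) = a i := fun i => rfl
  have hga : w ^ (k+2) • a = g + (2 * (k+2) * w ^ (k+1) * u x) • x := by
    ext i
    simp only [PiLp.smul_apply, PiLp.add_apply, smul_eq_mul]
    rw [hg i, grad_VV k (hu.differentiableAt (by norm_num)), hai, ← hw]
    ring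
  have hgb : ‖g‖ ≤ w ^ (k+1) * u x * 2 := by
    have h1 : ‖g‖ * w ≤ (w ^ (k+1) * u x * 2) * w := by
      calc ‖g‖ * w = ‖g‖ * (3/4 - ‖x‖) * (3/4 + ‖x‖) := by rw [hww]; ring
        _ ≤ VV k u x * 2 := by
          apply mul_le_mul hgn (by linarith) (by linarith)
          exact le_trans (mul_nonneg (norm_nonneg _) (by linarith)) hgn
        _ = _ := by rw [VV, ← hw]; ring
    exact le_of_mul_le_mul_right h1 hwpos
  have hab : w * ‖a‖ ≤ 2 * (k+3) * u x := by
    have h1 : w ^ (k+1) * (w * ‖a‖) ≤ w ^ (k+1) * (2 * (k+3) * u x) := by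
      calc w ^ (k+1) * (w * ‖a‖) = ‖w ^ (k+2) • a‖ := by
            rw [norm_smul, Real.norm_of_nonneg (by positivity)]; ring
        _ ≤ ‖g‖ + (2 * (k+2) * w ^ (k+1) * u x) * ‖x‖ := by
            rw [hga]
            refine (norm_add_le _ _).trans ?_
            rw [norm_smul, Real.norm_of_nonneg (by positivity)]
        _ ≤ w ^ (k+1) * u x * 2 + (2 * (k+2) * w ^ (k+1) * u x) * 1 := by
            gcongr
            linarith
        _ = _ := by ring
    exact le_of_mul_le_mul_left h1 (by positivity)
  have hexp : ∑ i, ∑ j, A i j * (-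
      fderiv ℝ (fun y => fderiv ℝ (VV k u) y (EuclideanSpace.single i 1)) x
        (EuclideanSpace.single j 1)) =
      - w ^ (k+2) * (∑ i, ∑ j, A i j *
      fderiv ℝ (fun y => fderiv ℝ u y (EuclideanSpace.single i 1)) x
        (EuclideanSpace.single j 1))
      + 2 * (k+2) * w ^ (k+1) * (∑ i, ∑ j, A i j * (x i * a j))
      + 2 * (k+2) * w ^ (k+1) * (∑ i, ∑ j, A i j * (a i * x j))
      + 2 * (k+2) * w ^ (k+1) * u x * (∑ i, ∑ j, A i j * (if i = j then 1 else 0))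
      - 4 * (k+2) * (k+1) * w ^ k * u x * (∑ i, ∑ j, A i j * (x i * x j)) := by
    simp only [Finset.mul_sum, ← Finset.sum_add_distrib, ← Finset.sum_sub_distrib]
    refine Finset.sum_congr rfl fun i _ => Finset.sum_congr rfl fun j _ => ?_
    rw [hess_VV k hu, hai, hai, ← hw]
    ring
  have b1 := quad_bound lam Lam A hA x a
  have b2 := quad_bound lam Lam A hA a x
  have b3 : ∑ i, ∑ j, A i j * (if i = j then 1 else 0) ≤ n * Lam := by
    calc ∑ i, ∑ j, A i j * (if i = j then 1 else 0) = ∑ i, A i i := by simp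
      _ ≤ ∑ i : Fin n, Lam := by
        refine Finset.sum_le_sum fun i _ => ?_
        have := quad_bound lam Lam A hA (EuclideanSpace.single i 1) (EuclideanSpace.single i 1)
        simpa [Pi.single_apply] using this
      _ = _ := by simp
  have b4 : 0 ≤ ∑ i, ∑ j, A i j * (x i * x j) := by
    have h1 : ∑ i, ∑ j, A i j * (x i * x j) = ∑ i, x i * (∑ j, A i j * x j) := by
      refine Finset.sum_congr rfl fun i _ => ?_
      rw [Finset.mul_sum]
      exact Finset.sum_congr rfl fun j _ => by ring
    rw [h1]
    exact le_trans (by positivity) (hA x).1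
  have c1 : w * (Lam * ‖x‖ * ‖a‖) ≤ Lam * (2 * (k+3) * u x) := by
    calc w * (Lam * ‖x‖ * ‖a‖) = Lam * (‖x‖ * (w * ‖a‖)) := by ring
      _ ≤ Lam * (1 * (2 * (k+3) * u x)) := by
        gcongr
        linarith
      _ = _ := by ring
  rw [hexp]
  have d0 := mul_nonneg (pow_nonneg hwpos.le (k+2)) hsub
  have d1 : 2 * (k+2) * w ^ (k+1) * (∑ i, ∑ j, A i j * (x i * a j)) ≤
      2 * (k+2) * w ^ k * (Lam * (2 * (k+3) * u x)) := by
    calc _ ≤ 2 * (k+2) * w ^ (k+1) * (Lam * ‖x‖ * ‖a‖) := by gcongr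
      _ = 2 * (k+2) * w ^ k * (w * (Lam * ‖x‖ * ‖a‖)) := by ring
      _ ≤ _ := by gcongr
  have d2 : 2 * (k+2) * w ^ (k+1) * (∑ i, ∑ j, A i j * (a i * x j)) ≤
      2 * (k+2) * w ^ k * (Lam * (2 * (k+3) * u x)) := by
    calc _ ≤ 2 * (k+2) * w ^ (k+1) * (Lam * ‖a‖ * ‖x‖) := by gcongr
      _ = 2 * (k+2) * w ^ k * (w * (Lam * ‖x‖ * ‖a‖)) := by ring
      _ ≤ _ := by gcongr
  have d3 : 2 * (k+2) * w ^ (k+1) * u x * (∑ i, ∑ j, A i j * (if i = j then 1 else 0)) ≤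
      2 * (k+2) * w ^ k * u x * (n * Lam) := by
    calc _ ≤ 2 * (k+2) * w ^ (k+1) * u x * (n * Lam) := by gcongr
      _ = w * (2 * (k+2) * w ^ k * u x * (n * Lam)) := by ring
      _ ≤ 1 * (2 * (k+2) * w ^ k * u x * (n * Lam)) := by gcongr
      _ = _ := by ring
  have d4 : 0 ≤ 4 * (k+2) * (k+1) * w ^ k * u x * (∑ i, ∑ j, A i j * (x i * x j)) := by
    positivity
  nlinarith [d0, d1, d2, d3, d4]

def GG {n : ℕ} (v : Eucl n → ℝ) (y : Eucl n) : Eucl n :=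
  WithLp.toLp 2 fun i => - fderiv ℝ v y (EuclideanSpace.single i 1)

def HH {n : ℕ} (v : Eucl n → ℝ) (x : Eucl n) : Matrix (Fin n) (Fin n) ℝ :=
  Matrix.of fun i j => - fderiv ℝ (fun y => fderiv ℝ v y (EuclideanSpace.single i 1)) x
        (EuclideanSpace.single j 1)

lemma GG_contDiffAt {n : ℕ} {v : Eucl n → ℝ} {x : Eucl n} (hv : ContDiffAt ℝ 2 v x) :
    ContDiffAt ℝ 1 (GG v) x := by
  rw [contDiffAt_euclidean]
  intro i
  exact ((hv.fderiv_right (m := 1) (by norm_num)).clm_apply contDiffAt_const).neg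

lemma GG_det {n : ℕ} {v : Eucl n → ℝ} {x : Eucl n} (hv : ContDiffAt ℝ 2 v x) :
    (fderiv ℝ (GG v) x).det = (HH v x).det := by
  rw [ContinuousLinearMap.det, ← LinearMap.det_toMatrix (EuclideanSpace.basisFun (Fin n) ℝ).toBasis]
  congr 1
  ext i j
  have hd : DifferentiableAt ℝ (GG v) x := (GG_contDiffAt hv).differentiableAt (by norm_num)
  have h1 : HasFDerivAt (fun y => GG v y i)
      ((EuclideanSpace.proj i : Eucl n →L[ℝ] ℝ).comp (fderiv ℝ (GG v) x)) x :=
    (EuclideanSpace.proj i : Eucl n →L[ℝ] ℝ).hasFDerivAt.comp x hd.hasFDerivAt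
  have h2 : (fun y => GG v y i) = fun y => -(fderiv ℝ v y (EuclideanSpace.single i 1)) := rfl
  have h3 := congrArg (fun L : Eucl n →L[ℝ] ℝ => L (EuclideanSpace.single j 1)) h1.fderiv
  rw [h2, fderiv_fun_neg] at h3
  simp [LinearMap.toMatrix_apply, HH] at h3 ⊢
  exact h3.symm

lemma HH_posSemidef {n : ℕ} {v : Eucl n → ℝ} {x : Eucl n} (hv : ContDiffAt ℝ 2 v x)
    (h : ∀ ξ, fderiv ℝ (fderiv ℝ v) x ξ ξ ≤ 0) : (HH v x).PosSemidef := by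
  rw [Matrix.posSemidef_iff_dotProduct_mulVec]
  constructor
  · ext i j
    simp [HH, hess_apply_s4 hv]
    exact hess_symm_s4 hv _ _
  · intro z
    have hz : (WithLp.toLp 2 z : Eucl n) = ∑ i, z i • EuclideanSpace.single i (1:ℝ) := by
      ext j
      simp [Pi.single_apply]
    have h1 := h (WithLp.toLp 2 z)
    rw [hz] at h1
    simp only [map_sum, map_smul, _root_.sum_apply, _root_.smul_apply,
      smul_eq_mul, Finset.mul_sum] at h1
    have h2 : star z ⬝ᵥ Matrix.mulVec (HH v x) z = - ∑ i, ∑ j, z i * (z j *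
        fderiv ℝ (fderiv ℝ v) x (EuclideanSpace.single j 1) (EuclideanSpace.single i 1)) := by
      simp only [dotProduct, Matrix.mulVec, HH, Matrix.of_apply, hess_apply_s4 hv, Finset.mul_sum,
        ← Finset.sum_neg_distrib]
      refine Finset.sum_congr rfl fun i _ => Finset.sum_congr rfl fun j _ => ?_
      simp only [Pi.star_apply, star_trivial]
      ring
    rw [h2]
    linarith

lemma contact {n : ℕ} (lam Lam : ℝ) (hlam : 0 < lam) (hlL : lam ≤ Lam)
    (A : Eucl n → Matrix (Fin n) (Fin n) ℝ) (hA : UnifElliptic lam Lam (ball (0 : Eucl n) 1) A)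
    (u : Eucl n → ℝ) (hu : NondivSubsolution A (ball (0 : Eucl n) 1) u) (k : ℕ) (M : ℝ)
    (hM : 0 < M) (x0 : Eucl n) (hx0 : ‖x0‖ ≤ 3/4) (hx0M : VV k u x0 = M)
    (p : Eucl n) (hp : ‖p‖ < M / 2) :
    ∃ x : Eucl n, ‖x‖ < 3/4 ∧ 0 < u x ∧ GG (VV k u) x = p ∧
      |(fderiv ℝ (GG (VV k u)) x).det| ≤
        (Lam * (2 * (k+2) * n + 8 * (k+2) * (k+3)) * (u x * WW x ^ k) / lam) ^ n := by
  have hcd : ∀ x : Eucl n, ‖x‖ < 1 → ContDiffAt ℝ 2 u x := fun x hx =>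
    hu.1.contDiffAt (isOpen_ball.mem_nhds (by simpa using hx))
  have hcont : ContinuousOn (fun y => VV k u y + inner ℝ p y) (closedBall (0 : Eucl n) (3/4)) := by
    intro y hy
    have hy' : ‖y‖ ≤ 3/4 := by simpa using hy
    have h1 := (VV_contDiffAt k (hcd y (by linarith))).continuousAt
    exact (h1.add (by fun_prop)).continuousWithinAt
  obtain ⟨x, hx, hmax⟩ := (isCompact_closedBall (0 : Eucl n) (3/4)).exists_isMaxOn
    ⟨0, mem_closedBall_self (by norm_num)⟩ hcont
  have hxn : ‖x‖ ≤ 3/4 := by simpa using hx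
  have hmax' : ∀ y : Eucl n, ‖y‖ ≤ 3/4 → VV k u y + inner ℝ p y ≤ VV k u x + inner ℝ p x :=
    fun y hy => hmax (by simpa using hy)
  have hvx : 0 < VV k u x := by
    have h1 := hmax' x0 hx0
    have h2 := real_inner_le_norm p x
    have h3 := neg_le_of_abs_le (abs_real_inner_le_norm p x0)
    have h4 : ‖p‖ * ‖x‖ ≤ ‖p‖ * (3/4) := by gcongr
    have h5 : ‖p‖ * ‖x0‖ ≤ ‖p‖ * (3/4) := by gcongr
    linarith
  have hxlt : ‖x‖ < 3/4 := by
    refine lt_of_le_of_ne hxn fun h => ?_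
    rw [VV, WW, h] at hvx
    simp at hvx
  have hw : 0 < WW x := by
    rw [WW]; nlinarith [norm_nonneg x]
  have hux : 0 < u x := by
    rw [VV] at hvx
    exact (mul_pos_iff_of_pos_left (pow_pos hw _)).mp hvx
  have hux2 := hcd x (by linarith)
  have hv2 := VV_contDiffAt k hux2
  have hloc : IsLocalMax (fun y => VV k u y - (-(innerSL ℝ p)) y) x := by
    have hn : closedBall (0 : Eucl n) (3/4) ∈ nhds x :=
      mem_of_superset (isOpen_ball.mem_nhds (by simpa using hxlt)) ball_subset_closedBall
    filter_upwards [hn] with y hy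
    have := hmax' y (by simpa using hy)
    simpa using this
  have hso := second_order hv2 _ hloc
  have hgrad : ∀ i, fderiv ℝ (VV k u) x (EuclideanSpace.single i 1) = - p i := by
    intro i
    rw [(hso 0).1]
    simp [EuclideanSpace.inner_single_right]
  have hpn : ‖-p‖ * (3/4 - ‖x‖) ≤ VV k u x := by
    rw [norm_neg]
    by_cases hp0 : p = 0
    · simp [hp0]; exact hvx.le
    · have hp1 : 0 < ‖p‖ := norm_pos_iff.mpr hp0
      have hyn : ‖(3/4/‖p‖) • p‖ = 3/4 := by
        rw [norm_smul, Real.norm_of_nonneg (by positivity)]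
        field_simp
      have h1 := hmax' ((3/4/‖p‖) • p) hyn.le
      have h2 : VV k u ((3/4/‖p‖) • p) = 0 := by
        rw [VV, WW, hyn]; simp
      have h3 : inner ℝ p ((3/4/‖p‖) • p) = 3/4 * ‖p‖ := by
        rw [inner_smul_right, real_inner_self_eq_norm_sq]
        field_simp
      have h4 := real_inner_le_norm p x
      rw [h2, h3] at h1
      linarith
  refine ⟨x, hxlt, hux, ?_, ?_⟩
  · ext i
    simp [GG, hgrad]
  · rw [GG_det hv2]
    have hxb : x ∈ ball (0 : Eucl n) 1 := by simp; linarith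
    refine det_bound lam _ hlam (A x) (HH (VV k u) x) (fun ξ => (hA x hxb ξ).1)
      (HH_posSemidef hv2 fun ξ => (hso ξ).2) ?_
    exact tr_bound lam Lam hlam hlL (A x) (hA x hxb) k hux2 hxlt hux (hu.2 x hxb) (-p)
      (fun i => by simp [hgrad]) hpn

lemma pow_interp (n k : ℕ) (κ u w M : ℝ) (hκ : 0 ≤ κ) (hu : 0 < u) (hw : 0 < w)
    (hM : w ^ (k+2) * u ≤ M) (q : ℝ) (hq : q = 2 * n / (k+2)) :
    (κ * (u * w ^ k)) ^ n ≤ κ ^ n * M ^ ((n:ℝ) - q) * u ^ q := by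
  have hk : (0:ℝ) < k + 2 := by positivity
  have hqn : 0 ≤ (n:ℝ) - q := by
    rw [hq, sub_nonneg, div_le_iff₀ hk]
    have : (0:ℝ) ≤ n * k := by positivity
    nlinarith
  have h1 : (w ^ (k+2) * u) ^ ((n:ℝ) - q) * u ^ q = (u * w ^ k) ^ n := by
    rw [Real.mul_rpow (by positivity) hu.le, mul_assoc, ← Real.rpow_add hu, mul_pow,
      ← Real.rpow_natCast w, ← Real.rpow_mul hw.le]
    have e1 : ((k + 2 : ℕ) : ℝ) * ((n:ℝ) - q) = ((k * n : ℕ) : ℝ) := by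
      rw [hq]; push_cast; field_simp; ring
    have e2 : (n:ℝ) - q + q = (n : ℝ) := by ring
    rw [e1, e2, Real.rpow_natCast, Real.rpow_natCast, pow_mul]
    ring
  rw [mul_pow, ← h1, mul_assoc]
  gcongr

lemma abp_bound {n : ℕ} (lam Lam : ℝ) (hlam : 0 < lam) (hlL : lam ≤ Lam)
    (A : Eucl n → Matrix (Fin n) (Fin n) ℝ) (hA : UnifElliptic lam Lam (ball (0 : Eucl n) 1) A)
    (u : Eucl n → ℝ) (hu : NondivSubsolution A (ball (0 : Eucl n) 1) u) (k : ℕ) (M : ℝ)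
    (hM : 0 < M) (x0 : Eucl n) (hx0 : ‖x0‖ ≤ 3/4) (hx0M : VV k u x0 = M)
    (hmax : ∀ y : Eucl n, ‖y‖ ≤ 3/4 → VV k u y ≤ M) (q κ : ℝ) (hq : q = 2 * n / (k+2))
    (hκ : κ = Lam * (2 * (k+2) * n + 8 * (k+2) * (k+3)) / lam) :
    ENNReal.ofReal ((M / 2) ^ n) * volume (ball (0 : Eucl n) 1) ≤
      ENNReal.ofReal (κ ^ n * M ^ ((n:ℝ) - q)) *
        ∫⁻ y in ball (0 : Eucl n) 1, ENNReal.ofReal (max (u y) 0 ^ q) := by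
  have hLam : 0 < Lam := hlam.trans_le hlL
  have hκ0 : 0 ≤ κ := by rw [hκ]; positivity
  set S := ball (0 : Eucl n) (3/4) with hS
  have hSo : IsOpen S := isOpen_ball
  have hcd : ∀ x ∈ S, ContDiffAt ℝ 2 u x := fun x hx =>
    hu.1.contDiffAt (isOpen_ball.mem_nhds (by simp [hS] at hx ⊢; linarith))
  have hG : ∀ x ∈ S, ContDiffAt ℝ 1 (GG (VV k u)) x := fun x hx =>
    GG_contDiffAt (VV_contDiffAt k (hcd x hx))
  let f : Eucl n → ℝ := fun x => |(fderiv ℝ (GG (VV k u)) x).det| - (κ * (u x * WW x ^ k)) ^ n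
  have huc : ContinuousOn u S := fun x hx => (hcd x hx).continuousAt.continuousWithinAt
  have hf : ContinuousOn f S := by
    intro x hx
    have h1 : ContinuousAt (fun x => fderiv ℝ (GG (VV k u)) x) x :=
      ((hG x hx).fderiv_right (m := 0) (by norm_num)).continuousAt
    have h2 : ContinuousAt (fun x => |(fderiv ℝ (GG (VV k u)) x).det|) x :=
      (ContinuousLinearMap.continuous_det.continuousAt.comp h1).abs
    have h3 : ContinuousAt (fun x => (κ * (u x * WW x ^ k)) ^ n) x :=
      ((continuousAt_const).mul ((hcd x hx).continuousAt.mul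
        (WW_contDiff.continuous.continuousAt.pow k))).pow n
    exact (h2.sub h3).continuousWithinAt
  let Γ : Set (Eucl n) := (S ∩ u ⁻¹' Set.Ioi 0) \ (S ∩ f ⁻¹' Set.Ioi 0)
  have hΓ : MeasurableSet Γ :=
    (huc.isOpen_inter_preimage hSo isOpen_Ioi).measurableSet.diff
      (hf.isOpen_inter_preimage hSo isOpen_Ioi).measurableSet
  have hΓS : Γ ⊆ S := fun x hx => hx.1.1
  have hΓu : ∀ x ∈ Γ, 0 < u x := fun x hx => hx.1.2
  have hΓf : ∀ x ∈ Γ, |(fderiv ℝ (GG (VV k u)) x).det| ≤ (κ * (u x * WW x ^ k)) ^ n := by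
    intro x hx
    by_contra! h
    exact hx.2 ⟨hx.1.1, by simpa [f] using h⟩
  have hsub : ball (0 : Eucl n) (M/2) ⊆ GG (VV k u) '' Γ := by
    intro p hp
    obtain ⟨x, h1, h2, h3, h4⟩ := contact lam Lam hlam hlL A hA u hu k M hM x0 hx0 hx0M p
      (by simpa using hp)
    have hxS : x ∈ S := by simpa [hS] using h1
    refine ⟨x, ⟨⟨hxS, h2⟩, fun h => ?_⟩, h3⟩
    have h5 : 0 < f x := h.2
    have h6 : Lam * (2 * (k+2) * n + 8 * (k+2) * (k+3)) * (u x * WW x ^ k) / lam =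
        κ * (u x * WW x ^ k) := by rw [hκ]; ring
    rw [h6] at h4
    simp only [f] at h5
    linarith
  have hvol : volume (ball (0 : Eucl n) (M/2)) =
      ENNReal.ofReal ((M / 2) ^ n) * volume (ball (0 : Eucl n) 1) := by
    have := Measure.addHaar_ball_of_pos (volume : Measure (Eucl n)) 0 (half_pos hM)
    simpa using this
  rw [← hvol]
  calc volume (ball (0 : Eucl n) (M/2)) ≤ volume (GG (VV k u) '' Γ) := measure_mono hsub
    _ ≤ ∫⁻ x in Γ, ENNReal.ofReal |(fderiv ℝ (GG (VV k u)) x).det| :=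
        addHaar_image_le_lintegral_abs_det_fderiv _ hΓ fun x hx =>
          ((hG x (hΓS hx)).differentiableAt (by norm_num)).hasFDerivAt.hasFDerivWithinAt
    _ ≤ ∫⁻ x in Γ, ENNReal.ofReal (κ ^ n * M ^ ((n:ℝ) - q)) * ENNReal.ofReal (max (u x) 0 ^ q) := by
        refine setLIntegral_mono' hΓ fun x hx => ?_
        rw [← ENNReal.ofReal_mul (by positivity)]
        apply ENNReal.ofReal_le_ofReal
        have hxn : ‖x‖ < 3/4 := by simpa [hS] using hΓS hx
        have hw : 0 < WW x := by
          rw [WW]; nlinarith [norm_nonneg x]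
        rw [max_eq_left (hΓu x hx).le]
        exact (hΓf x hx).trans (pow_interp n k κ (u x) (WW x) M hκ0 (hΓu x hx) hw
          (hmax x hxn.le) q hq)
    _ = ENNReal.ofReal (κ ^ n * M ^ ((n:ℝ) - q)) * ∫⁻ x in Γ, ENNReal.ofReal (max (u x) 0 ^ q) :=
        lintegral_const_mul' _ _ ENNReal.ofReal_ne_top
    _ ≤ _ := by
        gcongr
        exact hΓS.trans (ball_subset_ball (by norm_num))

lemma holder_bound {n : ℕ} (u : Eucl n → ℝ) (hu : ContinuousOn u (ball (0 : Eucl n) 1))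
    (p q : ℝ) (hq : 0 < q) (hqp : q ≤ p) :
    (∫⁻ y in ball (0 : Eucl n) 1, ENNReal.ofReal (max (u y) 0 ^ q)) ^ (1/q) ≤
      (∫⁻ y in ball (0 : Eucl n) 1, ENNReal.ofReal (max (u y) 0 ^ p)) ^ (1/p) *
        volume (ball (0 : Eucl n) 1) ^ (1/q - 1/p) := by
  have hm : AEStronglyMeasurable (fun y => max (u y) 0) (volume.restrict (ball (0 : Eucl n) 1)) :=
    (hu.sup continuousOn_const).aestronglyMeasurable isOpen_ball.measurableSet
  have h := eLpNorm'_le_eLpNorm'_mul_rpow_measure_univ hq hqp hm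
  have e : ∀ s : ℝ, 0 < s → ∀ y, ‖max (u y) 0‖ₑ ^ s = ENNReal.ofReal (max (u y) 0 ^ s) := by
    intro s hs y
    rw [Real.enorm_of_nonneg (le_max_right _ _), ENNReal.ofReal_rpow_of_nonneg (le_max_right _ _) hs.le]
  simpa only [eLpNorm', e q hq, e p (hq.trans_le hqp), Measure.restrict_apply_univ] using h

/-- **Local maximum principle with `L^p` norms, non-divergence form (Theorem 1.3)**:
for every `p > 0` there is `C(p) > 0` depending only on `p, n, λ, Λ` such that for any
`C²` subsolution `φ` of `tr(A D²φ) ≥ 0` in `B_1`,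
`sup_{B_{1/2}} φ⁺ ≤ C(p) (∫_{B_1} (φ⁺)^p)^{1/p}` (stated with the lower Lebesgue
integral, so that the right-hand side is `+∞` when `(φ⁺)^p` is not integrable). -/
theorem local_max_principle_nondivergence (n : ℕ) (hn : 2 ≤ n) (lam Lam : ℝ)
    (hlam : 0 < lam) (hlL : lam ≤ Lam) (p : ℝ) (hp : 0 < p) :
    ∃ C : ℝ, 0 < C ∧
      ∀ A : Eucl n → Matrix (Fin n) (Fin n) ℝ,
        UnifElliptic lam Lam (ball (0 : Eucl n) 1) A →
        ∀ φ : Eucl n → ℝ, NondivSubsolution A (ball (0 : Eucl n) 1) φ →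
          ∀ x ∈ ball (0 : Eucl n) (1 / 2),
            ENNReal.ofReal (max (φ x) 0) ≤ ENNReal.ofReal C *
              (∫⁻ y in ball (0 : Eucl n) 1, ENNReal.ofReal (max (φ y) 0 ^ p) ∂volume)
                ^ (1 / p) := by
  have hLam : 0 < Lam := hlam.trans_le hlL
  have hn0 : (0:ℝ) < n := by exact_mod_cast (by omega : 0 < n)
  obtain ⟨k, hk⟩ : ∃ k : ℕ, 2 * n / p ≤ k := exists_nat_ge _
  have hk2 : (0:ℝ) < k + 2 := by positivity
  obtain ⟨q, hq⟩ : ∃ q : ℝ, q = 2 * n / (k+2) := ⟨_, rfl⟩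
  obtain ⟨κ, hκ⟩ : ∃ κ : ℝ, κ = Lam * (2 * (k+2) * n + 8 * (k+2) * (k+3)) / lam := ⟨_, rfl⟩
  have hκ0 : 0 < κ := by rw [hκ]; positivity
  have hq0 : 0 < q := by rw [hq]; positivity
  have hqp : q ≤ p := by
    rw [hq, div_le_iff₀ hk2]
    rw [div_le_iff₀ hp] at hk
    nlinarith
  set V := (volume (ball (0 : Eucl n) 1)).toReal with hV
  have hVtop : volume (ball (0 : Eucl n) 1) ≠ ⊤ := measure_ball_lt_top.ne
  have hV0 : 0 < V := ENNReal.toReal_pos (measure_ball_pos _ _ one_pos).ne' hVtop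
  have hVe : volume (ball (0 : Eucl n) 1) = ENNReal.ofReal V := (ENNReal.ofReal_toReal hVtop).symm
  set C1 := (2 * κ) ^ n / V with hC1
  have hC10 : 0 < C1 := by positivity
  refine ⟨(16/5) ^ (k+2) * (C1 ^ (1/q) * V ^ (1/q - 1/p)), by positivity, ?_⟩
  intro A hA u hu x hx
  have hxn : ‖x‖ < 1/2 := by simpa using hx
  by_cases hux : u x ≤ 0
  · rw [max_eq_right hux]; simp
  push Not at hux
  have hcont : ContinuousOn (VV k u) (closedBall (0 : Eucl n) (3/4)) := by
    intro y hy
    have hy' : ‖y‖ ≤ 3/4 := by simpa using hy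
    have h0 : ContDiffAt ℝ 2 u y :=
      hu.1.contDiffAt (isOpen_ball.mem_nhds (by simp; linarith))
    exact (VV_contDiffAt k h0).continuousAt.continuousWithinAt
  obtain ⟨x0, hx0, hmax⟩ := (isCompact_closedBall (0 : Eucl n) (3/4)).exists_isMaxOn
    ⟨0, mem_closedBall_self (by norm_num)⟩ hcont
  obtain ⟨M, hMe⟩ : ∃ M, VV k u x0 = M := ⟨_, rfl⟩
  have hmax' : ∀ y : Eucl n, ‖y‖ ≤ 3/4 → VV k u y ≤ M := by
    intro y hy
    rw [← hMe]
    exact hmax (by simpa using hy)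
  have hw : 5/16 ≤ WW x := by rw [WW]; nlinarith [norm_nonneg x]
  have huM : u x ≤ (16/5) ^ (k+2) * M := by
    have h1 := hmax' x (by linarith)
    have h2 : (5/16:ℝ) ^ (k+2) * u x ≤ M := by
      refine le_trans ?_ h1
      rw [VV]
      gcongr
    calc u x = (16/5) ^ (k+2) * ((5/16:ℝ) ^ (k+2) * u x) := by
          rw [← mul_assoc, ← mul_pow]; norm_num
      _ ≤ _ := by gcongr
  have hM : 0 < M := by
    have : 0 < (16/5:ℝ) ^ (k+2) * M := hux.trans_le huM
    exact (mul_pos_iff_of_pos_left (by positivity)).mp this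
  have habp := abp_bound lam Lam hlam hlL A hA u hu k M hM x0 (by simpa using hx0) hMe hmax' q κ hq hκ
  set I := ∫⁻ y in ball (0 : Eucl n) 1, ENNReal.ofReal (max (u y) 0 ^ q) with hI
  have hMq : ENNReal.ofReal (M ^ q) ≤ ENNReal.ofReal C1 * I := by
    rw [hVe, ← ENNReal.ofReal_mul (by positivity)] at habp
    have h1 := mul_le_mul_right habp (ENNReal.ofReal (2 ^ n * M ^ (q - n) / V))
    rw [← mul_assoc (ENNReal.ofReal _) (ENNReal.ofReal _) I, ← ENNReal.ofReal_mul (by positivity),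
      ← ENNReal.ofReal_mul (by positivity)] at h1
    have e1 : 2 ^ n * M ^ (q - n) / V * ((M / 2) ^ n * V) = M ^ q := by
      rw [Real.rpow_sub hM, Real.rpow_natCast, div_pow]
      field_simp
    have e2 : 2 ^ n * M ^ (q - n) / V * (κ ^ n * M ^ ((n:ℝ) - q)) = C1 := by
      rw [Real.rpow_sub hM, Real.rpow_sub hM, Real.rpow_natCast, hC1, mul_pow]
      have := Real.rpow_pos_of_pos hM q
      field_simp
    rwa [e1, e2] at h1
  have hMI : ENNReal.ofReal M ≤ ENNReal.ofReal (C1 ^ (1/q)) * I ^ (1/q) := by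
    have h1 := ENNReal.rpow_le_rpow hMq (by positivity : 0 ≤ 1/q)
    rw [ENNReal.mul_rpow_of_nonneg _ _ (by positivity), ENNReal.ofReal_rpow_of_pos (by positivity),
      ENNReal.ofReal_rpow_of_pos hC10, ← Real.rpow_mul hM.le, mul_one_div_cancel hq0.ne',
      Real.rpow_one] at h1
    exact h1
  have hH := holder_bound u hu.1.continuousOn p q hq0 hqp
  rw [hVe, ENNReal.ofReal_rpow_of_pos hV0] at hH
  rw [max_eq_left hux.le]
  calc ENNReal.ofReal (u x) ≤ ENNReal.ofReal ((16/5) ^ (k+2) * M) := ENNReal.ofReal_le_ofReal huM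
    _ = ENNReal.ofReal ((16/5) ^ (k+2)) * ENNReal.ofReal M := ENNReal.ofReal_mul (by positivity)
    _ ≤ ENNReal.ofReal ((16/5) ^ (k+2)) * (ENNReal.ofReal (C1 ^ (1/q)) * (_ * _)) := by
        gcongr
        exact hMI.trans (by gcongr)
    _ = _ := by
        rw [ENNReal.ofReal_mul (by positivity), ENNReal.ofReal_mul (by positivity)]
        ring

end
end
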